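/- arXiv:1801.07305 — 7 statements merged into one kernel-verified Lean document; each statement's English description precedes it below -/
import Mathlib

section
/- Let R ⊂ A be a Frobenius extension of rings. For every left A-module M, the Gorenstein projective dimension of M over R (via restriction of scalars) is at most the Gorenstein projective dimension of M over A: G-pd_R M ≤ G-pd_A M. -/
universe u

section Frobenius

variable {R A : Type u} [Ring R] [Ring A]

/-- A ring extension `ι : R →+* A` (an injective ring homomorphism) is a Frobenius extension
if there is an `R`-`R`-bimodule homomorphism `τ : A → R` together with dual bases
`x i`, `y i` in `A`. -/
def IsFrobeniusExtension (ι : R →+* A) : Prop :=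
  Function.Injective ι ∧
  ∃ (τ : A →+ R) (n : ℕ) (x y : Fin n → A),
    (∀ (r : R) (a : A), τ (ι r * a) = r * τ a) ∧
    (∀ (a : A) (r : R), τ (a * ι r) = τ a * r) ∧
    (∀ a : A, ∑ i, x i * ι (τ (y i * a)) = a) ∧
    (∀ a : A, ∑ i, ι (τ (a * x i)) * y i = a)

end Frobenius

/-- A left `R`-module `M` is Gorenstein projective if it is a syzygy of a totally acyclic
complex of projective modules: there is an acyclic complex `⋯ → P₁ → P₀ → P₋₁ → ⋯` of
projective `R`-modules which stays acyclic after applying `Hom_R(-, Q)` for every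
projective `R`-module `Q`, with `M ≅ ker (P₀ → P₋₁)`. -/
def IsGorensteinProjective (R : Type u) [Ring R] (M : ModuleCat.{u} R) : Prop :=
  ∃ (P : ℤ → ModuleCat.{u} R) (f : ∀ i : ℤ, P (i + 1) →ₗ[R] P i),
    (∀ i, Module.Projective R (P i)) ∧
    (∀ i, (f i).comp (f (i + 1)) = 0) ∧
    (∀ i, LinearMap.range (f (i + 1)) = LinearMap.ker (f i)) ∧
    (∀ Q : ModuleCat.{u} R, Module.Projective R Q →
      ∀ (i : ℤ) (g : P (i + 1) →ₗ[R] Q), g.comp (f (i + 1)) = 0 →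
        ∃ h : P i →ₗ[R] Q, h.comp (f i) = g) ∧
    Nonempty (↥M ≃ₗ[R] ↥(LinearMap.ker (f (-1))))

/-- `GPdimLE R n M` means that `M` admits a Gorenstein projective resolution of length `n`,
i.e. an exact sequence `0 → G_n → ⋯ → G₁ → G₀ → M → 0` with all `G_i` Gorenstein
projective. -/
def GPdimLE (R : Type u) [Ring R] : ℕ → ModuleCat.{u} R → Prop
  | 0, M => IsGorensteinProjective R M
  | n + 1, M => ∃ (G : ModuleCat.{u} R) (f : G →ₗ[R] M),
      Function.Surjective f ∧ IsGorensteinProjective R G ∧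
      GPdimLE R n (ModuleCat.of R ↥(LinearMap.ker f))

/-- The Gorenstein projective dimension of a left `R`-module, in `ℕ∞`. -/
noncomputable def GPdim (R : Type u) [Ring R] (M : ModuleCat.{u} R) : ℕ∞ :=
  sInf {k : ℕ∞ | ∃ n : ℕ, k = (n : ℕ∞) ∧ GPdimLE R n M}

section Helpers

variable {R A : Type u} [Ring R] [Ring A]

/-- Restriction of scalars on objects. -/
abbrev resObj (ι : R →+* A) (M : ModuleCat.{u} A) : ModuleCat.{u} R :=
  @ModuleCat.of R _ M _ (Module.compHom M ι)

theorem resObj_smul (ι : R →+* A) (M : ModuleCat.{u} A) (r : R) (m : resObj ι M) :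
    r • m = (ι r • (show M from m) : M) := rfl

/-- Restriction of scalars on linear maps. -/
def resMap (ι : R →+* A) {M N : ModuleCat.{u} A} (f : M →ₗ[A] N) :
    resObj ι M →ₗ[R] resObj ι N where
  toFun m := f m
  map_add' := f.map_add
  map_smul' r m := f.map_smul (ι r) m

/-- The lift of an `R`-linear functional-like map to an `A`-linear map. -/
theorem frob_lift (ι : R →+* A) (τ : A →+ R) (n : ℕ) (x y : Fin n → A)
    (h1 : ∀ a : A, ∑ i, x i * ι (τ (y i * a)) = a)
    (h2 : ∀ a : A, ∑ i, ι (τ (a * x i)) * y i = a)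
    (M : ModuleCat.{u} A) (φ : M →+ R) (hφ : ∀ r m, φ (ι r • m) = r * φ m) (a : A) (m : M) :
    ∑ i, x i * ι (φ (y i • a • m)) = a * ∑ i, x i * ι (φ (y i • m)) := by
  have e1 : ∀ j, φ (y j • a • m) = ∑ i, τ (y j * a * x i) * φ (y i • m) := by
    intro j
    conv_lhs => rw [← mul_smul, ← h2 (y j * a), Finset.sum_smul, map_sum]
    refine Finset.sum_congr rfl fun i _ => ?_
    rw [mul_smul, hφ]
  have e2 : ∀ i, a * x i = ∑ j, x j * ι (τ (y j * a * x i)) := by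
    intro i
    conv_lhs => rw [← h1 (a * x i)]
    simp only [mul_assoc]
  simp only [e1, Finset.mul_sum, map_sum, map_mul]
  rw [Finset.sum_comm]
  refine Finset.sum_congr rfl fun i _ => ?_
  rw [← mul_assoc, e2, Finset.sum_mul]
  simp only [mul_assoc]

theorem res_projective (ι : R →+* A) (hF : IsFrobeniusExtension ι) (M : ModuleCat.{u} A)
    (hM : Module.Projective A M) : Module.Projective R (resObj ι M) := by
  obtain ⟨-, τ, n, x, y, hl, hr, h1, h2⟩ := hF
  obtain ⟨s, hs⟩ := hM
  -- `M` is a direct summand of a free `R`-module on `M × Fin n`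
  let sec : resObj ι M →ₗ[R] ((i : Fin n) → M →₀ R) :=
    { toFun := fun m i => (s m).mapRange (fun a => τ (a * x i)) (by simp)
      map_add' := by
        intro p q
        ext i k
        have := congrArg (fun v => v k) (s.map_add p q)
        simp only [Finsupp.mapRange_apply, Pi.add_apply, Finsupp.add_apply]
        rw [← map_add, ← add_mul]
        exact congrArg (fun t => τ (t * x i)) this
      map_smul' := by
        intro r p
        ext i k
        have := congrArg (fun v => v k) (s.map_smul (ι r) p)
        simp only [Finsupp.mapRange_apply, Pi.smul_apply, Finsupp.smul_apply, smul_eq_mul,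
          RingHom.id_apply]
        rw [← hl, ← mul_assoc]
        exact congrArg (fun t => τ (t * x i)) this }
  let ret : ((i : Fin n) → M →₀ R) →ₗ[R] resObj ι M :=
    LinearMap.lsum R _ ℕ fun i =>
      (Finsupp.linearCombination R (M := resObj ι M) (fun m : M => (y i • m : M)))
  refine Module.Projective.of_split sec ret ?_
  ext m
  have key : ∀ v : M →₀ A, (∑ i, Finsupp.linearCombination R (M := resObj ι M)
      (fun m : M => (y i • m : M)) (v.mapRange (fun a => τ (a * x i)) (by simp)))
      = Finsupp.linearCombination A (id : M → M) v := by
    intro v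
    induction v using Finsupp.induction_linear with
    | zero => simp
    | add f g hf hg =>
      rw [map_add, ← hf, ← hg]
      refine Eq.trans ?_ Finset.sum_add_distrib
      refine Finset.sum_congr rfl fun i _ => ?_
      rw [← map_add]
      congr 1
      ext k
      simp [add_mul]
    | single k a =>
      simp only [Finsupp.mapRange_single, Finsupp.linearCombination_single, id]
      conv_rhs => rw [← h2 a, Finset.sum_smul]
      refine Finset.sum_congr rfl fun i _ => ?_
      rw [mul_smul]
      rfl
  have := (key (s m)).trans (hs m)
  simpa [ret, sec, LinearMap.lsum_apply] using this

theorem res_gproj (ι : R →+* A) (hF : IsFrobeniusExtension ι) (M : ModuleCat.{u} A)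
    (N : ModuleCat.{u} R) (e : M ≃+ N) (he : ∀ r m, e (ι r • m) = r • e m)
    (hM : IsGorensteinProjective A M) : IsGorensteinProjective R N := by
  obtain ⟨P, f, hP, hff, hex, htot, ⟨φ⟩⟩ := hM
  refine ⟨fun i => resObj ι (P i), fun i => resMap ι (f i),
    fun i => res_projective ι hF _ (hP i), ?_, ?_, ?_, ?_⟩
  · intro i
    ext m
    exact LinearMap.congr_fun (hff i) m
  · intro i
    ext m
    exact SetLike.ext_iff.mp (hex i) m
  · intro Q hQ i g hg
    obtain ⟨-, τ, n, x, y, hl, hr, h1, h2⟩ := hF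
    obtain ⟨s, hs⟩ := hQ
    let c : Q → P (i + 1) →+ R := fun q =>
      { toFun := fun p => s (g p) q
        map_zero' := by
          have : g (0 : P (i + 1)) = 0 := g.map_zero
          rw [this]; simp
        map_add' := by
          intro a b
          have : g (a + b : P (i + 1)) = g a + g b := g.map_add a b
          rw [this]; simp }
    have hc : ∀ q r m, c q (ι r • m) = r * c q m := by
      intro q r m
      have : g (ι r • m : P (i + 1)) = r • g m := g.map_smul r m
      change s (g (ι r • m : P (i + 1))) q = r * s (g m) q
      rw [this]; simp
    let G : P (i + 1) → (Q →₀ A) := fun p =>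
      ∑ j, (s (g (y j • p : P (i + 1)))).mapRange (fun r => x j * ι r) (by simp)
    have hG : ∀ p q, G p q = ∑ j, x j * ι (c q (y j • p)) := by
      intro p q
      simp only [G, Finsupp.finset_sum_apply, Finsupp.mapRange_apply]
      rfl
    let g' : P (i + 1) →ₗ[A] (Q →₀ A) :=
      { toFun := G
        map_add' := by
          intro a b
          ext q
          simp only [hG, Finsupp.add_apply, smul_add, map_add, mul_add, Finset.sum_add_distrib]
        map_smul' := by
          intro a p
          ext q
          simp only [hG, Finsupp.smul_apply, smul_eq_mul, RingHom.id_apply]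
          exact frob_lift ι τ n x y h1 h2 _ (c q) (hc q) a p }
    obtain ⟨h', hh'⟩ := htot (ModuleCat.of A (Q →₀ A))
      (inferInstanceAs (Module.Projective A (Q →₀ A))) i g' (by
        ext m : 1
        change G (f (i + 1) m) = 0
        ext q
        rw [hG]
        refine Finset.sum_eq_zero fun j _ => ?_
        have : c q (y j • f (i + 1) m) = 0 := by
          rw [← map_smul]
          change s (g (f (i + 1) (y j • m))) q = 0
          have h0 : g (f (i + 1) (y j • m)) = 0 := LinearMap.congr_fun hg (y j • m)
          rw [h0]; simp
        rw [this]; simp)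
    let T : resObj ι (P i) →ₗ[R] (Q →₀ R) :=
      { toFun := fun p => Finsupp.mapRange τ (map_zero τ) (show Q →₀ A from h' p)
        map_add' := by
          intro a b
          have : h' (a + b : P i) = h' a + h' b := h'.map_add a b
          ext q
          simp only [Finsupp.mapRange_apply, Finsupp.add_apply]
          rw [← map_add]
          exact congrArg (fun v : Q →₀ A => τ (v q)) this
        map_smul' := by
          intro r a
          have : h' (ι r • a : P i) = ι r • h' a := h'.map_smul _ a
          ext q
          simp only [Finsupp.mapRange_apply, Finsupp.smul_apply, smul_eq_mul, RingHom.id_apply]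
          rw [← hl]
          exact congrArg (fun v : Q →₀ A => τ (v q)) this }
    refine ⟨(Finsupp.linearCombination R id).comp T, ?_⟩
    ext p
    have hT : T (resMap ι (f i) p) = s (g p) := by
      ext q
      have h3 : h' (f i p) = G p := LinearMap.congr_fun hh' p
      change τ ((show Q →₀ A from h' (f i p)) q) = c q p
      rw [h3]
      change τ (G p q) = _
      rw [hG, map_sum]
      simp only [hr]
      have h4 : c q p = c q ((1 : A) • p : P (i + 1)) := by rw [one_smul]
      rw [h4, ← h2 1, Finset.sum_smul, map_sum]
      refine Finset.sum_congr rfl fun j _ => ?_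
      rw [mul_smul, hc, one_mul]
    change Finsupp.linearCombination R id (T (resMap ι (f i) p)) = g p
    rw [hT]
    exact hs (g p)
  · refine ⟨{ toFun := fun m => ⟨(φ (e.symm m) : P (-1 + 1)), (φ (e.symm m)).2⟩
              invFun := fun k => e (φ.symm ⟨k.1, k.2⟩)
              left_inv := ?_
              right_inv := ?_
              map_add' := ?_
              map_smul' := ?_ }⟩
    · intro a b
      apply Subtype.ext
      change ((φ (e.symm (a + b))).1 : P (-1 + 1)) = (φ (e.symm a)).1 + (φ (e.symm b)).1
      simp
    · intro r a
      apply Subtype.ext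
      have : e.symm (r • a) = ι r • e.symm a := by
        rw [AddEquiv.symm_apply_eq, he]; simp
      change ((φ (e.symm (r • a))).1 : P (-1 + 1)) = ι r • (φ (e.symm a)).1
      rw [this]; simp
    · intro m
      change e (φ.symm (φ (e.symm m))) = m
      simp
    · intro k
      apply Subtype.ext
      change ((φ (e.symm (e (φ.symm ⟨k.1, k.2⟩)))).1 : P (-1 + 1)) = k.1
      simp

theorem res_gpdimLE (ι : R →+* A) (hF : IsFrobeniusExtension ι) (n : ℕ) :
    ∀ (M : ModuleCat.{u} A) (N : ModuleCat.{u} R) (e : M ≃+ N)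
      (_ : ∀ r m, e (ι r • m) = r • e m), GPdimLE A n M → GPdimLE R n N := by
  induction n with
  | zero => exact fun M N e he h => res_gproj ι hF M N e he h
  | succ n ih =>
    rintro M N e he ⟨G, f, hf, hG, hK⟩
    let f' : resObj ι G →ₗ[R] N :=
      { toFun := fun x => e (f x)
        map_add' := fun a b => (congrArg e (f.map_add a b)).trans (e.map_add _ _)
        map_smul' := fun r a => (congrArg e (f.map_smul (ι r) a)).trans (he _ _) }
    refine ⟨resObj ι G, f', e.surjective.comp hf,
      res_gproj ι hF G _ (AddEquiv.refl _) (fun _ _ => rfl) hG, ?_⟩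
    have hk : ∀ x : G, f x = 0 ↔ e (f x) = 0 := fun x => by simp
    refine ih _ _ ({ toFun := fun x => ⟨x.1, (hk x.1).1 x.2⟩
                     invFun := fun x => ⟨x.1, (hk x.1).2 x.2⟩
                     left_inv := fun _ => rfl
                     right_inv := fun _ => rfl
                     map_add' := fun _ _ => rfl } :
        LinearMap.ker f ≃+ LinearMap.ker f') (fun _ _ => rfl) hK

end Helpers

section Statement

variable {R A : Type u} [Ring R] [Ring A]

theorem stmt12 (ι : R →+* A) (hF : IsFrobeniusExtension ι)
    (M : Type u) [AddCommGroup M] [Module A M] :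
    GPdim R (@ModuleCat.of R _ M _ (Module.compHom M ι)) ≤ GPdim A (ModuleCat.of A M) := by
  refine le_sInf ?_
  rintro k ⟨n, rfl, hn⟩
  exact sInf_le ⟨n, rfl, res_gpdimLE ι hF n (ModuleCat.of A M)
    (@ModuleCat.of R _ M _ (Module.compHom M ι)) (AddEquiv.refl M) (fun _ _ => rfl) hn⟩

end Statement
end

section
/- Let R ⊂ A be a Frobenius extension of rings and let Q be a projective left R-module. Then Hom_R(A, Q) is isomorphic to A ⊗_R Q as left A-modules, and both are projective left A-modules. -/
universe u

section Frobenius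

variable {R A : Type u} [Ring R] [Ring A]

/-- The extension of scalars `A ⊗_R N` of a left `R`-module `N` along `ι : R →+* A`,
realized as the quotient of the free left `A`-module on `N` by the bilinearity and
balancing relations.  It is a left `A`-module. -/
abbrev ExtendedTensor (ι : R →+* A) (N : Type u) [AddCommGroup N] [Module R N] : Type u :=
  (N →₀ A) ⧸ Submodule.span A
    ({x : N →₀ A | ∃ n n' : N,
        x = Finsupp.single (n + n') 1 - Finsupp.single n 1 - Finsupp.single n' 1} ∪
     {x : N →₀ A | ∃ (r : R) (n : N),
        x = Finsupp.single (r • n) 1 - Finsupp.single n (ι r)})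

/-- The coinduced module `Hom_R(A, N)` of a left `R`-module `N` along `ι : R →+* A`,
where `A` is a left `R`-module via `ι`.  It is a left `A`-module via `(a • f) b = f (b * a)`. -/
abbrev CoinducedModule (ι : R →+* A) (N : Type u) [AddCommGroup N] [Module R N] : Type u :=
  @LinearMap R R _ _ (RingHom.id R) A N _ _ (Module.compHom A ι) _

noncomputable instance CoinducedModule.instModule (ι : R →+* A) (N : Type u)
    [AddCommGroup N] [Module R N] : Module A (CoinducedModule ι N) :=
  letI : Module R A := Module.compHom A ι
  { smul := fun a f =>
      { toFun := fun b => f (b * a)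
        map_add' := fun b c => by
          show f ((b + c) * a) = f (b * a) + f (c * a)
          rw [add_mul]; exact map_add f _ _
        map_smul' := fun r b => by
          show f (ι r * b * a) = r • f (b * a)
          rw [mul_assoc]
          exact map_smul f r (b * a) }
    one_smul := fun f => LinearMap.ext fun b => by show f (b * 1) = f b; rw [mul_one]
    mul_smul := fun a a' f => LinearMap.ext fun b => by
      show f (b * (a * a')) = f (b * a * a')
      rw [mul_assoc]
    smul_zero := fun a => LinearMap.ext fun b => rfl
    smul_add := fun a f g => LinearMap.ext fun b => rfl
    add_smul := fun a a' f => LinearMap.ext fun b => by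
      show f (b * (a + a')) = f (b * a) + f (b * a')
      rw [mul_add, map_add]
    zero_smul := fun f => LinearMap.ext fun b => by show f (b * 0) = 0; rw [mul_zero, map_zero] }

end Frobenius

section Helpers

variable {R A : Type u} [Ring R] [Ring A]

/-- The class of `1 ⊗ q`. -/
noncomputable def etMk (ι : R →+* A) (Q : Type u) [AddCommGroup Q] [Module R Q] (q : Q) :
    ExtendedTensor ι Q := Submodule.Quotient.mk (Finsupp.single q 1)

theorem etMk_add (ι : R →+* A) (Q : Type u) [AddCommGroup Q] [Module R Q] (q q' : Q) :
    etMk ι Q (q + q') = etMk ι Q q + etMk ι Q q' := by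
  unfold etMk
  rw [← Submodule.Quotient.mk_add, Submodule.Quotient.eq]
  apply Submodule.subset_span
  left
  exact ⟨q, q', by abel⟩

theorem etMk_smul (ι : R →+* A) (Q : Type u) [AddCommGroup Q] [Module R Q] (r : R) (q : Q) :
    etMk ι Q (r • q) = ι r • etMk ι Q q := by
  unfold etMk
  rw [← Submodule.Quotient.mk_smul, Submodule.Quotient.eq]
  apply Submodule.subset_span
  right
  exact ⟨r, q, by simp⟩

/-- Universal property. -/
theorem et_lift (ι : R →+* A) (Q : Type u) [AddCommGroup Q] [Module R Q]
    (M : Type u) [AddCommGroup M] [Module A M] (h : Q → M)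
    (hadd : ∀ q q', h (q + q') = h q + h q') (hsmul : ∀ (r : R) q, h (r • q) = ι r • h q) :
    ∃ F : ExtendedTensor ι Q →ₗ[A] M, ∀ q, F (etMk ι Q q) = h q := by
  refine ⟨Submodule.liftQ _ (Finsupp.linearCombination A h) ?_, ?_⟩
  · rw [Submodule.span_le]
    rintro z (⟨q, q', rfl⟩ | ⟨r, q, rfl⟩)
    · simp [hadd]
    · simp [hsmul]
  · intro q
    unfold etMk
    rw [Submodule.liftQ_apply]
    simp

theorem et_induction (ι : R →+* A) (Q : Type u) [AddCommGroup Q] [Module R Q]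
    (p : ExtendedTensor ι Q → Prop) (h0 : p 0) (hadd : ∀ s t, p s → p t → p (s + t))
    (hs : ∀ (a : A) q, p (a • etMk ι Q q)) (t) : p t := by
  obtain ⟨z, rfl⟩ := Submodule.Quotient.mk_surjective _ t
  induction z using Finsupp.induction_linear with
  | zero => exact h0
  | add f g hf hg => rw [Submodule.Quotient.mk_add]; exact hadd _ _ hf hg
  | single q a =>
    have := hs a q
    unfold etMk at this
    rw [← Submodule.Quotient.mk_smul] at this
    simpa using this

theorem et_projective (ι : R →+* A) (Q : Type u) [AddCommGroup Q] [Module R Q]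
    (hQ : Module.Projective R Q) : Module.Projective A (ExtendedTensor ι Q) := by
  apply Module.Projective.of_lifting_property''
  intro f hf
  letI m1 : Module R (ExtendedTensor ι Q →₀ A) := Module.compHom _ ι
  letI m2 : Module R (ExtendedTensor ι Q) := Module.compHom _ ι
  let f' : @LinearMap R R _ _ (RingHom.id R) (ExtendedTensor ι Q →₀ A) (ExtendedTensor ι Q)
      _ _ m1 m2 :=
    { toFun := f, map_add' := map_add f, map_smul' := fun r z => f.map_smul (ι r) z }
  let j : @LinearMap R R _ _ (RingHom.id R) Q (ExtendedTensor ι Q) _ _ _ m2 :=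
    { toFun := etMk ι Q, map_add' := etMk_add ι Q, map_smul' := etMk_smul ι Q }
  obtain ⟨h, hh⟩ := Module.projective_lifting_property f' j hf
  obtain ⟨F, hF⟩ := et_lift ι Q (ExtendedTensor ι Q →₀ A) h (fun q q' => h.map_add q q')
    (fun r q => h.map_smul r q)
  refine ⟨F, LinearMap.ext fun t => ?_⟩
  induction t using et_induction with
  | h0 => simp
  | hadd s t hs ht => rw [map_add, hs, ht, map_add]
  | hs a q =>
    rw [map_smul, map_smul]
    congr 1
    rw [LinearMap.comp_apply, hF]
    exact LinearMap.congr_fun hh q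

theorem coind_iso (ι : R →+* A) (hF : IsFrobeniusExtension ι)
    (Q : Type u) [AddCommGroup Q] [Module R Q] :
    Nonempty (CoinducedModule ι Q ≃ₗ[A] ExtendedTensor ι Q) := by
  obtain ⟨-, τ, n, x, y, hl, hr, hx, hy⟩ := hF
  letI : Module R A := Module.compHom A ι
  let v : Q → CoinducedModule ι Q := fun q =>
    { toFun := fun b => τ b • q
      map_add' := fun b c => by rw [map_add, add_smul]
      map_smul' := fun r b => by
        show τ (ι r * b) • q = r • τ b • q
        rw [hl, mul_smul] }
  have hv : ∀ (a : A) q b, (a • v q) b = τ (b * a) • q := fun _ _ _ => rfl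
  obtain ⟨Φ, hΦ⟩ := et_lift ι Q (CoinducedModule ι Q) v
    (fun q q' => LinearMap.ext fun b => smul_add (τ b) q q')
    (fun r q => LinearMap.ext fun b => by
      rw [hv, hr]; exact (mul_smul (τ b) r q).symm)
  let jm : Q →+ ExtendedTensor ι Q := AddMonoidHom.mk' (etMk ι Q) (etMk_add ι Q)
  have inv : ∀ t, ∑ i, x i • jm (Φ t (y i)) = t := by
    intro t
    induction t using et_induction with
    | h0 => simp
    | hadd s t hs ht =>
      conv_rhs => rw [← hs, ← ht]
      rw [← Finset.sum_add_distrib]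
      refine Finset.sum_congr rfl fun i _ => ?_
      rw [map_add, LinearMap.add_apply, map_add, smul_add]
    | hs a q =>
      have : ∀ i, x i • jm (Φ (a • etMk ι Q q) (y i))
          = (x i * ι (τ (y i * a))) • etMk ι Q q := by
        intro i
        rw [map_smul, hΦ, hv, mul_smul, ← etMk_smul]
        rfl
      simp_rw [this]
      rw [← Finset.sum_smul, hx]
  refine ⟨(LinearEquiv.ofBijective Φ ⟨?_, ?_⟩).symm⟩
  · rw [injective_iff_map_eq_zero]
    intro t ht
    rw [← inv t, ht]
    simp
  · intro f
    refine ⟨∑ i, x i • etMk ι Q (f (y i)), LinearMap.ext fun b => ?_⟩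
    rw [map_sum, LinearMap.sum_apply]
    have : ∀ i, Φ (x i • etMk ι Q (f (y i))) b = f (ι (τ (b * x i)) * y i) := by
      intro i
      rw [map_smul, hΦ, hv]
      exact (f.map_smul (τ (b * x i)) (y i)).symm
    simp_rw [this]
    rw [← map_sum, hy]

end Helpers

section Statement

variable {R A : Type u} [Ring R] [Ring A]

theorem stmt13 (ι : R →+* A) (hF : IsFrobeniusExtension ι)
    (Q : Type u) [AddCommGroup Q] [Module R Q] (hQ : Module.Projective R Q) :
    Nonempty (CoinducedModule ι Q ≃ₗ[A] ExtendedTensor ι Q) ∧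
      Module.Projective A (CoinducedModule ι Q) ∧
      Module.Projective A (ExtendedTensor ι Q) := by
  obtain ⟨e⟩ := coind_iso ι hF Q
  have hP := et_projective ι Q hQ
  exact ⟨⟨e⟩, Module.Projective.of_equiv e.symm, hP⟩

end Statement
end

section
/- Let R ⊂ A be a Frobenius extension of rings and let I be an injective left R-module. Then A ⊗_R I is isomorphic to Hom_R(A, I) as left A-modules, and both are injective left A-modules. -/
universe u

section Helpers

variable {R A : Type u} [Ring R] [Ring A]

/-- Evaluation of an element of the coinduced module. -/
def coEv (ι : R →+* A) {N : Type u} [AddCommGroup N] [Module R N]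
    (f : CoinducedModule ι N) : A →+ N :=
  letI : Module R A := Module.compHom A ι
  f.toAddMonoidHom

/-- Construct an element of the coinduced module. -/
def coMk (ι : R →+* A) {N : Type u} [AddCommGroup N] [Module R N]
    (f : A →+ N) (hf : ∀ r a, f (ι r * a) = r • f a) : CoinducedModule ι N :=
  letI : Module R A := Module.compHom A ι
  { toFun := f
    map_add' := f.map_add
    map_smul' := hf }

section
variable (ι : R →+* A) {N : Type u} [AddCommGroup N] [Module R N]

theorem coEv_ext {f g : CoinducedModule ι N} (h : ∀ a, coEv ι f a = coEv ι g a) : f = g :=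
  letI : Module R A := Module.compHom A ι
  LinearMap.ext h

theorem coEv_mk (f : A →+ N) (hf : ∀ r a, f (ι r * a) = r • f a) (a : A) :
    coEv ι (coMk ι f hf) a = f a := rfl

theorem coEv_mul (f : CoinducedModule ι N) (r : R) (a : A) :
    coEv ι f (ι r * a) = r • coEv ι f a :=
  letI : Module R A := Module.compHom A ι
  f.map_smul' r a

theorem coEv_add (f g : CoinducedModule ι N) (a : A) :
    coEv ι (f + g) a = coEv ι f a + coEv ι g a := rfl

theorem coEv_smul (f : CoinducedModule ι N) (a b : A) :
    coEv ι (a • f) b = coEv ι f (b * a) := rfl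

/-- Evaluation at a point as an additive map in the function. -/
def coEvHom (b : A) : CoinducedModule ι N →+ N where
  toFun f := coEv ι f b
  map_zero' := rfl
  map_add' _ _ := rfl

theorem coind_injective (hI : Module.Injective R N) : Module.Injective A (CoinducedModule ι N) := by
  constructor
  intro X Y _ _ _ _ f hf g
  letI : Module R X := Module.compHom X ι
  letI : Module R Y := Module.compHom Y ι
  let f' : X →ₗ[R] Y :=
    { toFun := f, map_add' := f.map_add, map_smul' := fun r x => f.map_smul (ι r) x }
  let g' : X →ₗ[R] N :=
    { toFun := fun x => coEv ι (g x) 1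
      map_add' := fun x y => by rw [map_add, coEv_add]
      map_smul' := fun r x => by
        show coEv ι (g (ι r • x)) 1 = r • coEv ι (g x) 1
        rw [map_smul, coEv_smul, ← coEv_mul, one_mul, mul_one] }
  obtain ⟨h, hh⟩ := hI.out f' hf g'
  have hsm : ∀ (r : R) (y : Y), h (ι r • y) = r • h y := fun r y => h.map_smul r y
  refine ⟨{ toFun := fun y => coMk ι
              { toFun := fun a => h (a • y), map_zero' := by simp
                map_add' := fun a b => by rw [add_smul, map_add] }
              (fun r a => by
                show h ((ι r * a) • y) = r • h (a • y)
                rw [mul_smul, hsm])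
            map_add' := fun y z => coEv_ext ι fun a => by
              show h (a • (y + z)) = h (a • y) + h (a • z)
              rw [smul_add, map_add]
            map_smul' := fun a y => coEv_ext ι fun b => by
              show h (b • a • y) = h ((b * a) • y)
              rw [mul_smul] }, ?_⟩
  intro x
  refine coEv_ext ι fun a => ?_
  show h (a • f x) = coEv ι (g x) a
  rw [← map_smul]
  refine (hh (a • x)).trans ?_
  show coEv ι (g (a • x)) 1 = _
  rw [map_smul, coEv_smul, one_mul]

theorem ext_single_add (a : A) (n n' : N) :
    (Submodule.Quotient.mk (Finsupp.single (n + n') a) : ExtendedTensor ι N) =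
      Submodule.Quotient.mk (Finsupp.single n a) + Submodule.Quotient.mk (Finsupp.single n' a) := by
  rw [← Submodule.Quotient.mk_add, Submodule.Quotient.eq]
  have e : Finsupp.single (n + n') a - (Finsupp.single n a + Finsupp.single n' a) =
      a • (Finsupp.single (n + n') 1 - Finsupp.single n 1 - Finsupp.single n' 1 : N →₀ A) := by
    simp only [smul_sub, smul_add, sub_sub, Finsupp.smul_single, smul_eq_mul, mul_one]
  rw [e]
  exact Submodule.smul_mem _ a (Submodule.subset_span (Set.mem_union_left _ ⟨n, n', rfl⟩))

theorem ext_single_smul (a : A) (r : R) (n : N) :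
    (Submodule.Quotient.mk (Finsupp.single (r • n) a) : ExtendedTensor ι N) =
      Submodule.Quotient.mk (Finsupp.single n (a * ι r)) := by
  rw [Submodule.Quotient.eq]
  have e : Finsupp.single (r • n) a - Finsupp.single n (a * ι r) =
      a • (Finsupp.single (r • n) 1 - Finsupp.single n (ι r) : N →₀ A) := by
    simp only [smul_sub, Finsupp.smul_single, smul_eq_mul, mul_one]
  rw [e]
  exact Submodule.smul_mem _ a (Submodule.subset_span (Set.mem_union_right _ ⟨r, n, rfl⟩))

/-- The pure tensor `a ⊗ n`, additive in `n`. -/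
noncomputable def extPure (a : A) : N →+ ExtendedTensor ι N :=
  AddMonoidHom.mk' (fun n => Submodule.Quotient.mk (Finsupp.single n a))
    (ext_single_add ι a)

theorem frob_equiv (hF : IsFrobeniusExtension ι) :
    Nonempty (ExtendedTensor ι N ≃ₗ[A] CoinducedModule ι N) := by
  obtain ⟨-, τ, k, x, y, hl, hr, h1, h2⟩ := hF
  let c : N → CoinducedModule ι N := fun n => coMk ι
    { toFun := fun b => τ b • n, map_zero' := by simp
      map_add' := fun a b => by rw [map_add, add_smul] }
    (fun r a => by
      show τ (ι r * a) • n = r • τ a • n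
      rw [hl, mul_smul])
  have hc : ∀ n b, coEv ι (c n) b = τ b • n := fun n b => rfl
  let φ₀ : (N →₀ A) →ₗ[A] CoinducedModule ι N := Finsupp.linearCombination A c
  have hφ₀ : ∀ n a, φ₀ (Finsupp.single n a) = a • c n := fun n a =>
    Finsupp.linearCombination_single A a n
  let φ : ExtendedTensor ι N →ₗ[A] CoinducedModule ι N := Submodule.liftQ _ φ₀ (by
    rw [Submodule.span_le]
    rintro _ (⟨n, n', rfl⟩ | ⟨r, n, rfl⟩)
    · show φ₀ _ = 0
      rw [map_sub, map_sub, hφ₀, hφ₀, hφ₀, one_smul, one_smul, one_smul, sub_sub, sub_eq_zero]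
      refine coEv_ext ι fun b => ?_
      rw [coEv_add, hc, hc, hc, smul_add]
    · show φ₀ _ = 0
      rw [map_sub, hφ₀, hφ₀, one_smul, sub_eq_zero]
      refine coEv_ext ι fun b => ?_
      rw [coEv_smul, hc, hc, hr, mul_smul])
  have hφ : ∀ a n, φ (extPure ι a n) = a • c n := fun a n => hφ₀ n a
  let ψ : CoinducedModule ι N →+ ExtendedTensor ι N :=
    ∑ i, (extPure ι (x i)).comp (coEvHom ι (y i))
  have hψ : ∀ f, ψ f = ∑ i, extPure ι (x i) (coEv ι f (y i)) := fun f => by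
    simp only [ψ, AddMonoidHom.finsetSum_apply]; rfl
  have hψφ : ∀ t, ψ (φ t) = t := by
    intro t
    induction t using Submodule.Quotient.induction_on with | _ t => ?_
    induction t using Finsupp.induction_linear with
    | zero => rw [Submodule.Quotient.mk_zero, map_zero, map_zero]
    | add p q hp hq => rw [Submodule.Quotient.mk_add, map_add, map_add, hp, hq]
    | single n a =>
      change ψ (φ (extPure ι a n)) = extPure ι a n
      rw [hφ, hψ]
      simp only [coEv_smul, hc]
      have : ∀ i, extPure ι (x i) (τ (y i * a) • n) =
          (Submodule.Quotient.mk (Finsupp.single n (x i * ι (τ (y i * a)))) :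
            ExtendedTensor ι N) := fun i => ext_single_smul ι _ _ _
      simp only [this]
      conv_rhs => rw [← h1 a]
      show _ = Submodule.mkQ _ (Finsupp.single n _)
      rw [Finsupp.single_finsetSum, map_sum]
      rfl
  have hφψ : ∀ f, φ (ψ f) = f := by
    intro f
    rw [hψ, map_sum]
    simp only [hφ]
    refine coEv_ext ι fun b => ?_
    change coEvHom ι b _ = _
    rw [map_sum]
    conv_rhs => rw [← h2 b, map_sum]
    refine Finset.sum_congr rfl fun i _ => ?_
    change coEv ι (x i • c _) b = _
    rw [coEv_smul, hc, coEv_mul]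
  exact ⟨LinearEquiv.ofBijective φ
    ⟨Function.LeftInverse.injective hψφ, Function.RightInverse.surjective hφψ⟩⟩

end

end Helpers

section Statement

variable {R A : Type u} [Ring R] [Ring A]

theorem stmt14 (ι : R →+* A) (hF : IsFrobeniusExtension ι)
    (I : Type u) [AddCommGroup I] [Module R I] (hI : Module.Injective R I) :
    Nonempty (ExtendedTensor ι I ≃ₗ[A] CoinducedModule ι I) ∧
      Module.Injective A (ExtendedTensor ι I) ∧
      Module.Injective A (CoinducedModule ι I) := by
  obtain ⟨e⟩ := frob_equiv (N := I) ι hF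
  have hc := coind_injective (N := I) ι hI
  refine ⟨⟨e⟩, ⟨?_⟩, hc⟩
  intro X Y _ _ _ _ f hf g
  obtain ⟨h, hh⟩ := hc.out f hf (e.toLinearMap.comp g)
  refine ⟨e.symm.toLinearMap.comp h, fun x => ?_⟩
  rw [LinearMap.comp_apply, hh]
  exact e.symm_apply_apply (g x)

end Statement
end

section
/- Let R ⊂ A be a Frobenius extension of rings and let M be a left A-module whose underlying left R-module is Gorenstein projective. Then Ext^i_A(M, P) = 0 for every projective left A-module P and every integer i ≥ 1. -/
universe u

/-- An (augmented) projective resolution `⋯ → P₁ → P₀ → M → 0` of a left `R`-module `M`. -/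
structure ProjectiveRes (R : Type u) [Ring R] (M : ModuleCat.{u} R) where
  P : ℕ → ModuleCat.{u} R
  d : ∀ i : ℕ, P (i + 1) →ₗ[R] P i
  ε : P 0 →ₗ[R] M
  projective : ∀ i, Module.Projective R (P i)
  surj : Function.Surjective ε
  exact_zero : LinearMap.range (d 0) = LinearMap.ker ε
  exact_succ : ∀ i, LinearMap.range (d (i + 1)) = LinearMap.ker (d i)

/-- `ExtSuccVanishes R M N j` expresses that `Ext^{j+1}_R(M, N) = 0`: for every projective
resolution `P_•` of `M`, the complex `Hom_R(P_•, N)` is exact at the spot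
`Hom_R(P_{j+1}, N)`. -/
def ExtSuccVanishes (R : Type u) [Ring R] (M N : ModuleCat.{u} R) (j : ℕ) : Prop :=
  ∀ res : ProjectiveRes R M, ∀ g : res.P (j + 1) →ₗ[R] N,
    g.comp (res.d (j + 1)) = 0 → ∃ h : res.P j →ₗ[R] N, h.comp (res.d j) = g

open CategoryTheory

section Helpers

/-- Factor a map through the range of another one. -/
lemma frob_factor {R : Type u} [Ring R] {X Y Q : Type u} [AddCommGroup X] [AddCommGroup Y]
    [AddCommGroup Q] [Module R X] [Module R Y] [Module R Q] (p : X →ₗ[R] Y) (g : X →ₗ[R] Q)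
    (h : LinearMap.ker p ≤ LinearMap.ker g) :
    ∃ g' : LinearMap.range p →ₗ[R] Q, ∀ x, g' (p.rangeRestrict x) = g x := by
  refine ⟨((LinearMap.ker p).liftQ g h).comp p.quotKerEquivRange.symm.toLinearMap, fun x => ?_⟩
  have : p.quotKerEquivRange.symm (p.rangeRestrict x) = (LinearMap.ker p).mkQ x := by
    rw [LinearEquiv.symm_apply_eq]
    rfl
  simp [this]

/-- Vanishing of `Ext^{n+1}(Z, Q)`. -/
def FrobEV (R : Type u) [Ring R] (Q : Type u) [AddCommGroup Q] [Module R Q]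
    (Z : Type u) [AddCommGroup Z] [Module R Z] (n : ℕ) : Prop :=
  ∀ e : Abelian.Ext.{u} (ModuleCat.of R Z) (ModuleCat.of R Q) (n + 1), e = 0

section ses

variable {R : Type u} [Ring R] {X Y Z : Type u} [AddCommGroup X] [AddCommGroup Y]
    [AddCommGroup Z] [Module R X] [Module R Y] [Module R Z]
    (a : X →ₗ[R] Y) (b : Y →ₗ[R] Z)

lemma frob_ses (ha : Function.Injective a) (hb : Function.Surjective b)
    (hab : LinearMap.range a = LinearMap.ker b) :
    (ShortComplex.mk (ModuleCat.ofHom a) (ModuleCat.ofHom b) (by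
      ext x
      have : a x ∈ LinearMap.ker b := hab ▸ LinearMap.mem_range_self a x
      simpa using this)).ShortExact where
  exact := by
    rw [ShortComplex.moduleCat_exact_iff_range_eq_ker]
    exact hab
  mono_f := (ModuleCat.mono_iff_injective _).2 ha
  epi_g := (ModuleCat.epi_iff_surjective _).2 hb

variable (ha : Function.Injective a) (hb : Function.Surjective b)
    (hab : LinearMap.range a = LinearMap.ker b) (hY : Module.Projective R Y)
    (Q : Type u) [AddCommGroup Q] [Module R Q]

include ha hb hab hY

lemma frob_EV_zero (H : ∀ g : X →ₗ[R] Q, ∃ h : Y →ₗ[R] Q, h.comp a = g) : FrobEV R Q Z 0 := by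
  intro e
  have hS := frob_ses a b ha hb hab
  have : Projective (ModuleCat.of R Y) := (IsProjective.iff_projective Y).1 hY
  obtain ⟨x, hx⟩ := Abelian.Ext.contravariant_sequence_exact₃ hS (ModuleCat.of R Q) e
    (Abelian.Ext.eq_zero_of_projective _) (n₀ := 0) rfl
  obtain ⟨g, rfl⟩ := (Abelian.Ext.mk₀_bijective _ _).2 x
  obtain ⟨h, hh⟩ := H g.hom
  have hg : g = ModuleCat.ofHom a ≫ ModuleCat.ofHom h := by
    ext x
    exact (LinearMap.congr_fun hh x).symm
  rw [← hx, hg, ← Abelian.Ext.mk₀_comp_mk₀]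
  exact hS.extClass_comp_assoc _

lemma frob_EV_ext (H : FrobEV R Q Z 0) (g : X →ₗ[R] Q) : ∃ h : Y →ₗ[R] Q, h.comp a = g := by
  have hS := frob_ses a b ha hb hab
  obtain ⟨x, hx⟩ := Abelian.Ext.contravariant_sequence_exact₁ hS (ModuleCat.of R Q)
    (Abelian.Ext.mk₀ (ModuleCat.ofHom g)) (n₁ := 1) rfl (H _)
  obtain ⟨h, rfl⟩ := (Abelian.Ext.mk₀_bijective _ _).2 x
  rw [Abelian.Ext.mk₀_comp_mk₀] at hx
  have := (Abelian.Ext.mk₀_bijective _ _).1 hx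
  exact ⟨h.hom, congrArg ModuleCat.Hom.hom this⟩

lemma frob_EV_up (n : ℕ) (H : FrobEV R Q X n) : FrobEV R Q Z (n + 1) := by
  intro e
  have hS := frob_ses a b ha hb hab
  have : Projective (ModuleCat.of R Y) := (IsProjective.iff_projective Y).1 hY
  obtain ⟨x, hx⟩ := Abelian.Ext.contravariant_sequence_exact₃ hS (ModuleCat.of R Q) e
    (Abelian.Ext.eq_zero_of_projective _) (n₀ := n + 1) (by omega)
  rw [← hx, H x, Abelian.Ext.comp_zero]

lemma frob_EV_down (n : ℕ) (H : FrobEV R Q Z (n + 1)) : FrobEV R Q X n := by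
  intro e
  have hS := frob_ses a b ha hb hab
  have : Projective (ModuleCat.of R Y) := (IsProjective.iff_projective Y).1 hY
  obtain ⟨x, hx⟩ := Abelian.Ext.contravariant_sequence_exact₁ hS (ModuleCat.of R Q) e
    (n₁ := n + 2) (by omega) (H _)
  rw [← hx, Abelian.Ext.eq_zero_of_projective x, Abelian.Ext.comp_zero]

end ses

/-- Gorenstein projective modules have no higher extensions by projectives. -/
lemma frob_gp_EV {R : Type u} [Ring R] (M : ModuleCat.{u} R) (hM : IsGorensteinProjective R M)
    (Q : Type u) [AddCommGroup Q] [Module R Q] (hQ : Module.Projective R Q) (n : ℕ) :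
    FrobEV R Q M n := by
  obtain ⟨P, f, hP, -, hex, htot, ⟨e⟩⟩ := hM
  have hext : ∀ i (g : LinearMap.range (f (i + 1)) →ₗ[R] Q),
      ∃ h : P (i + 1) →ₗ[R] Q, h.comp (LinearMap.range (f (i + 1))).subtype = g := by
    intro i g
    obtain ⟨h, hh⟩ := htot (ModuleCat.of R Q) hQ (i + 1) (g.comp (f (i + 1)).rangeRestrict) (by
      ext x
      have : (f (i + 1)).rangeRestrict (f (i + 1 + 1) x) = 0 := by
        apply Subtype.ext
        have h1 : f (i + 1 + 1) x ∈ LinearMap.ker (f (i + 1)) :=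
          hex (i + 1) ▸ LinearMap.mem_range_self _ x
        exact h1
      simp [this])
    refine ⟨h, ?_⟩
    ext ⟨y, x, rfl⟩
    exact LinearMap.congr_fun hh x
  have key : ∀ n i, FrobEV R Q (LinearMap.range (f i)) n := by
    intro n
    induction n with
    | zero =>
      intro i
      refine frob_EV_zero (LinearMap.range (f (i + 1))).subtype (f i).rangeRestrict
        (Submodule.injective_subtype _) (LinearMap.surjective_rangeRestrict _) ?_ (hP _) Q (hext i)
      rw [Submodule.range_subtype, LinearMap.ker_rangeRestrict, hex]
    | succ n ih =>
      intro i
      refine frob_EV_up (LinearMap.range (f (i + 1))).subtype (f i).rangeRestrict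
        (Submodule.injective_subtype _) (LinearMap.surjective_rangeRestrict _) ?_ (hP _) Q n (ih _)
      rw [Submodule.range_subtype, LinearMap.ker_rangeRestrict, hex]
  let b : P (-1 + 1 + 1) →ₗ[R] M := e.symm.toLinearMap.comp
    ((f (-1 + 1)).codRestrict (LinearMap.ker (f (-1)))
      (fun x => hex (-1) ▸ LinearMap.mem_range_self _ x))
  have hb : Function.Surjective b := by
    refine e.symm.surjective.comp ?_
    rintro ⟨y, hy⟩
    rw [← hex] at hy
    obtain ⟨x, rfl⟩ := hy
    exact ⟨x, rfl⟩
  have hk : LinearMap.range (LinearMap.range (f (-1 + 1 + 1))).subtype = LinearMap.ker b := by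
    rw [Submodule.range_subtype, hex, LinearEquiv.ker_comp, LinearMap.ker_codRestrict]
  cases n with
  | zero => exact frob_EV_zero _ b (Submodule.injective_subtype _) hb hk (hP _) Q (hext _)
  | succ n => exact frob_EV_up _ b (Submodule.injective_subtype _) hb hk (hP _) Q n (key _ _)

/-- Exactness of `Hom(X_•, Q)` from vanishing of Ext. -/
lemma frob_exact {R : Type u} [Ring R] {M : Type u} [AddCommGroup M] [Module R M]
    {Q : Type u} [AddCommGroup Q] [Module R Q] (hM : ∀ n, FrobEV R Q M n)
    (X : ℕ → Type u) [∀ i, AddCommGroup (X i)] [∀ i, Module R (X i)]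
    (d : ∀ i, X (i + 1) →ₗ[R] X i) (ε : X 0 →ₗ[R] M) (hX : ∀ i, Module.Projective R (X i))
    (hε : Function.Surjective ε) (h0 : LinearMap.range (d 0) = LinearMap.ker ε)
    (hs : ∀ i, LinearMap.range (d (i + 1)) = LinearMap.ker (d i))
    (j : ℕ) (g : X (j + 1) →ₗ[R] Q) (hg : g.comp (d (j + 1)) = 0) :
    ∃ h : X j →ₗ[R] Q, h.comp (d j) = g := by
  have h0' : LinearMap.range (LinearMap.range (d 0)).subtype = LinearMap.ker ε := by
    rw [Submodule.range_subtype, h0]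
  have hs' : ∀ i, LinearMap.range (LinearMap.range (d (i + 1))).subtype
      = LinearMap.ker (d i).rangeRestrict := fun i => by
    rw [Submodule.range_subtype, LinearMap.ker_rangeRestrict, hs]
  have key : ∀ i n, FrobEV R Q (LinearMap.range (d i)) n := by
    intro i
    induction i with
    | zero =>
      exact fun n =>
        frob_EV_down _ ε (Submodule.injective_subtype _) hε h0' (hX _) Q n (hM _)
    | succ i ih =>
      exact fun n =>
        frob_EV_down (LinearMap.range (d (i + 1))).subtype (d i).rangeRestrict
          (Submodule.injective_subtype _) (LinearMap.surjective_rangeRestrict _)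
          (hs' i) (hX _) Q n (ih _)
  have hext : ∀ g' : LinearMap.range (d j) →ₗ[R] Q,
      ∃ h : X j →ₗ[R] Q, h.comp (LinearMap.range (d j)).subtype = g' := by
    cases j with
    | zero => exact frob_EV_ext _ ε (Submodule.injective_subtype _) hε h0' (hX _) Q (hM _)
    | succ i =>
      exact frob_EV_ext (LinearMap.range (d (i + 1))).subtype (d i).rangeRestrict
          (Submodule.injective_subtype _) (LinearMap.surjective_rangeRestrict _)
          (hs' i) (hX _) Q (key _ _)
  obtain ⟨g', hg'⟩ := frob_factor (d j) g (by
    rw [← hs, LinearMap.range_le_ker_iff, hg])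
  obtain ⟨h, hh⟩ := hext g'
  refine ⟨h, ?_⟩
  ext x
  rw [← hg' x, ← hh]
  rfl

/-- Restriction of a projective module along a Frobenius extension is projective. -/
lemma frob_restrict {R A : Type u} [Ring R] [Ring A] [Module R A] [IsScalarTower R A A]
    (hA : Module.Projective R A) (P : Type u) [AddCommGroup P] [Module A P] [Module R P]
    [IsScalarTower R A P] (hP : Module.Projective A P) : Module.Projective R P := by
  obtain ⟨s, hs⟩ := hP
  have : Module.Projective R (P →₀ A) := by
    classical
    exact Module.Projective.of_equiv' (finsuppLequivDFinsupp (ι := P) (M := A) R).symm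
  refine Module.Projective.of_split (s.restrictScalars R)
    ((Finsupp.linearCombination A id).restrictScalars R) ?_
  ext x
  exact hs x

end Helpers

section Statement

variable {R A : Type u} [Ring R] [Ring A]

theorem stmt15 (ι : R →+* A) (hF : IsFrobeniusExtension ι)
    (M : Type u) [AddCommGroup M] [Module A M]
    (hM : IsGorensteinProjective R (@ModuleCat.of R _ M _ (Module.compHom M ι))) :
    ∀ P : ModuleCat.{u} A, Module.Projective A P →
      ∀ j : ℕ, ExtSuccVanishes A (ModuleCat.of A M) P j := by
  intro P hP j res g hg
  obtain ⟨-, τ, n, x, y, hτl, hτr, hxy, hyx⟩ := hF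
  letI iA : Module R A := Module.compHom A ι
  letI iM : Module R M := Module.compHom M ι
  letI iP : Module R P := Module.compHom P ι
  letI iX : ∀ i, Module R (res.P i) := fun i => Module.compHom (res.P i) ι
  have smA : ∀ (r : R) (a : A), r • a = ι r * a := fun _ _ => rfl
  have smP : ∀ (r : R) (a : P), r • a = ι r • a := fun _ _ => rfl
  have smX : ∀ i (r : R) (a : res.P i), r • a = ι r • a := fun _ _ _ => rfl
  have : IsScalarTower R A A := ⟨fun r a b => by simp [smA, mul_assoc]⟩
  have : IsScalarTower R A P := ⟨fun r a b => by simp [smA, smP, mul_smul]⟩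
  have : IsScalarTower R A M := ⟨fun r a b => mul_smul (ι r) a b⟩
  have : ∀ i, IsScalarTower R A (res.P i) := fun i => ⟨fun r a b => mul_smul (ι r) a b⟩
  -- A is projective over R
  have hA : Module.Projective R A := by
    refine Module.Projective.of_split (M := Fin n → R)
      { toFun := fun a i => τ (a * x i)
        map_add' := fun a b => by ext i; simp [add_mul]
        map_smul' := fun r a => by ext i; simp [smA, mul_assoc, hτl] }
      { toFun := fun c => ∑ i, ι (c i) * y i
        map_add' := fun a b => by simp [add_mul, Finset.sum_add_distrib]
        map_smul' := fun r a => by simp [smA, mul_assoc, Finset.mul_sum] } ?_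
    ext a
    exact hyx a
  have hPR : Module.Projective R P := frob_restrict hA P hP
  have hXR : ∀ i, Module.Projective R (res.P i) := fun i =>
    frob_restrict hA (res.P i) (res.projective i)
  -- the R-linear endomorphism of P with trace the identity
  let t : A →ₗ[R] A :=
    { toFun := fun a => ι (τ a)
      map_add' := fun a b => by simp
      map_smul' := fun r a => by simp [smA, hτl] }
  obtain ⟨s, hs⟩ := hP
  let θ : P →ₗ[R] P := ((Finsupp.linearCombination A id).restrictScalars R).comp
    ((Finsupp.mapRange.linearMap t).comp (s.restrictScalars R))
  have hθ : ∀ p : P, ∑ i, x i • θ (y i • p) = p := by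
    intro p
    have h1 : ∀ i, x i • θ (y i • p) = Finsupp.linearCombination A id
        (x i • Finsupp.mapRange.linearMap t (y i • s p)) := by
      intro i
      rw [(Finsupp.linearCombination A id).map_smul, ← s.map_smul]
      rfl
    rw [Finset.sum_congr rfl (fun i _ => h1 i), ← map_sum]
    conv_rhs => rw [← hs p]
    congr 1
    ext q
    rw [Finsupp.finsetSum_apply]
    exact hxy (s p q)
  -- the Ext vanishing over R
  obtain ⟨h', hh'⟩ := frob_exact (R := R) (M := M) (Q := P)
    (fun m => frob_gp_EV _ hM P hPR m) (fun i => res.P i)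
    (fun i => (res.d i).restrictScalars R) (LinearMap.restrictScalars R (M₂ := M) res.ε) hXR res.surj
    (by
      ext v
      exact SetLike.ext_iff.1 res.exact_zero v)
    (fun i => by
      ext v
      exact SetLike.ext_iff.1 (res.exact_succ i) v)
    j (θ.comp (g.restrictScalars R)) (by
      ext v
      have := LinearMap.congr_fun hg v
      simp only [LinearMap.comp_apply, LinearMap.zero_apply] at this
      simp [this])
  have hh : ∀ v, h' (res.d j v) = θ (g v) := fun v => LinearMap.congr_fun hh' v
  have hι : ∀ (r : R) v, h' (ι r • v) = ι r • h' v := fun r v => h'.map_smul r v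
  refine ⟨
    { toFun := fun v => ∑ i, x i • h' (y i • v)
      map_add' := fun v w => by simp [Finset.sum_add_distrib]
      map_smul' := fun a v => ?_ }, ?_⟩
  · have e1 : ∀ i, h' (y i • a • v) = ∑ k, ι (τ (y i * a * x k)) • h' (y k • v) := by
      intro i
      rw [← mul_smul]
      conv_lhs => rw [← hyx (y i * a), Finset.sum_smul, map_sum]
      refine Finset.sum_congr rfl fun k _ => ?_
      rw [mul_smul, hι]
    simp only [e1, Finset.smul_sum, RingHom.id_apply]
    rw [Finset.sum_comm]
    refine Finset.sum_congr rfl fun k _ => ?_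
    simp only [← mul_smul]
    rw [← Finset.sum_smul]
    congr 1
    conv_rhs => rw [← hxy (a * x k)]
    simp only [mul_assoc]
  · ext v
    change ∑ i, x i • h' (y i • res.d j v) = g v
    rw [← hθ (g v)]
    refine Finset.sum_congr rfl fun i _ => ?_
    rw [← (res.d j).map_smul, hh, g.map_smul]

end Statement
end

section
/- Let R ⊂ A be a Frobenius extension of rings and let M be a left A-module. If G-pd_A M < ∞ and n ∈ ℕ is such that Ext^{n+i}_A(M, P) = 0 for every projective left A-module P and every i ≥ 1, then G-pd_A M ≤ n; in particular, if G-pd_A M < ∞ and G-pd_R M = n < ∞, then Ext^{n+i}_A(M, P) = 0 for all projective left A-modules P and all i ≥ 1, and hence G-pd_A M ≤ G-pd_R M. -/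
universe u

namespace GorAux

open CategoryTheory CategoryTheory.Abelian

variable {R : Type u} [Ring R]

/-- Short exact sequences of modules, elementwise. -/
def SES {X E Y : ModuleCat.{u} R} (i : X →ₗ[R] E) (p : E →ₗ[R] Y) : Prop :=
  Function.Injective i ∧ Function.Exact i p ∧ Function.Surjective p

/-- `Ext^k(X,Q) = 0`. -/
def EV (k : ℕ) (X Q : ModuleCat.{u} R) : Prop := Subsingleton (Ext X Q k)

/-- The short complex. -/
def SES.sc {X E Y : ModuleCat.{u} R} {i : X →ₗ[R] E} {p : E →ₗ[R] Y} (h : SES i p) :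
    ShortComplex (ModuleCat.{u} R) :=
  ShortComplex.mk (ModuleCat.ofHom i) (ModuleCat.ofHom p)
    (ModuleCat.hom_ext (LinearMap.ext fun x => h.2.1.apply_apply_eq_zero x))

lemma SES.shortExact {X E Y : ModuleCat.{u} R} {i : X →ₗ[R] E} {p : E →ₗ[R] Y}
    (h : SES i p) : h.sc.ShortExact where
  exact := (ShortComplex.ShortExact.moduleCat_exact_iff_function_exact _).2 h.2.1
  mono_f := (ModuleCat.mono_iff_injective _).2 h.1
  epi_g := (ModuleCat.epi_iff_surjective _).2 h.2.2

section
variable {X E Y : ModuleCat.{u} R} {i : X →ₗ[R] E} {p : E →ₗ[R] Y}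

lemma SES.ev_mid (h : SES i p) {k : ℕ} {Q : ModuleCat.{u} R} (hX : EV k X Q) (hY : EV k Y Q) :
    EV k E Q := by
  refine subsingleton_of_forall_eq 0 fun x => ?_
  obtain ⟨y, rfl⟩ := Ext.contravariant_sequence_exact₂ h.shortExact Q x
    (@Subsingleton.elim _ hX _ _)
  have hy : y = (0 : Ext h.sc.X₃ Q k) := @Subsingleton.elim _ hY _ _
  rw [hy, Ext.comp_zero]
  rfl

lemma SES.ev_right (h : SES i p) {k : ℕ} {Q : ModuleCat.{u} R} (hX : EV k X Q)
    (hE : EV (k + 1) E Q) : EV (k + 1) Y Q := by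
  refine subsingleton_of_forall_eq 0 fun x => ?_
  obtain ⟨y, rfl⟩ := Ext.contravariant_sequence_exact₃ h.shortExact Q x
    (@Subsingleton.elim _ hE _ _) (add_comm 1 k)
  have hy : y = (0 : Ext h.sc.X₁ Q k) := @Subsingleton.elim _ hX _ _
  rw [hy, Ext.comp_zero]
  rfl

lemma SES.ev_left (h : SES i p) {k : ℕ} {Q : ModuleCat.{u} R} (hE : EV k E Q)
    (hY : EV (k + 1) Y Q) : EV k X Q := by
  refine subsingleton_of_forall_eq 0 fun x => ?_
  obtain ⟨y, rfl⟩ := Ext.contravariant_sequence_exact₁ h.shortExact Q x (add_comm 1 k)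
    (@Subsingleton.elim _ hY _ _)
  have hy : y = (0 : Ext h.sc.X₂ Q k) := @Subsingleton.elim _ hE _ _
  rw [hy, Ext.comp_zero]
  rfl

lemma ev_proj (P Q : ModuleCat.{u} R) [Module.Projective R P] (k : ℕ) : EV (k + 1) P Q := by
  have : CategoryTheory.Projective P := (IsProjective.iff_projective P).1 inferInstance
  exact subsingleton_of_forall_eq 0 fun x => Ext.eq_zero_of_projective x

lemma SES.extend (h : SES i p) {Q : ModuleCat.{u} R} (hY : EV 1 Y Q) (g : X →ₗ[R] Q) :
    ∃ f : E →ₗ[R] Q, ∀ x, f (i x) = g x := by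
  obtain ⟨y, hy⟩ := Ext.contravariant_sequence_exact₁ h.shortExact Q (Ext.mk₀ (ModuleCat.ofHom g))
    (add_comm 1 0) (@Subsingleton.elim _ hY _ _)
  obtain ⟨f, rfl⟩ := (Ext.mk₀_bijective _ _).2 y
  rw [Ext.mk₀_comp_mk₀] at hy
  have := (Ext.mk₀_bijective _ _).1 hy
  exact ⟨f.hom, fun x => congrArg (fun (t : X ⟶ Q) => t.hom x) this⟩

lemma SES.ev_one (h : SES i p) [Module.Projective R E] {Q : ModuleCat.{u} R}
    (hh : ∀ g : X →ₗ[R] Q, ∃ f : E →ₗ[R] Q, ∀ x, f (i x) = g x) : EV 1 Y Q := by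
  refine subsingleton_of_forall_eq 0 fun x => ?_
  obtain ⟨y, rfl⟩ := Ext.contravariant_sequence_exact₃ h.shortExact Q x
    (@Subsingleton.elim _ (ev_proj E Q 0) _ _) (add_comm 1 0)
  obtain ⟨g, rfl⟩ := (Ext.mk₀_bijective _ _).2 y
  obtain ⟨f, hf⟩ := hh g.hom
  let f' : h.sc.X₂ ⟶ Q := ModuleCat.ofHom f
  have : g = h.sc.f ≫ f' := by
    ext x; exact (hf x).symm
  rw [this, ← Ext.mk₀_comp_mk₀]
  exact h.shortExact.extClass_comp_assoc _
end

/-- Perpendicular to the projectives. -/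
def Perp (X : ModuleCat.{u} R) : Prop :=
  ∀ Q : ModuleCat.{u} R, Module.Projective R Q → ∀ k, EV (k + 1) X Q

/-- one-step property -/
def Step (C : ModuleCat.{u} R → Prop) (X : ModuleCat.{u} R) : Prop :=
  Perp X ∧ ∃ (P Y : ModuleCat.{u} R) (i : X →ₗ[R] P) (p : P →ₗ[R] Y), 
    Module.Projective R P ∧ SES i p ∧ C Y

/-- coinductive Gorenstein projectives -/
def GP (X : ModuleCat.{u} R) : Prop :=
  ∃ C : ModuleCat.{u} R → Prop, (∀ X, C X → Step C X) ∧ C X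

lemma Step.mono {C D : ModuleCat.{u} R → Prop} (h : ∀ X, C X → D X) {X} (hX : Step C X) :
    Step D X := by
  obtain ⟨hp, P, Y, i, p, h1, h2, h3⟩ := hX
  exact ⟨hp, P, Y, i, p, h1, h2, h _ h3⟩

lemma GP.step {X : ModuleCat.{u} R} (h : GP X) : Step GP X := by
  obtain ⟨C, hC, hX⟩ := h
  exact (hC X hX).mono fun Y hY => ⟨C, hC, hY⟩

lemma GP.perp {X : ModuleCat.{u} R} (h : GP X) : Perp X := h.step.1

lemma GP.of_step {X : ModuleCat.{u} R} (h : Step GP X) : GP X := by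
  refine ⟨fun Z => Step GP Z, fun Z hZ => ?_, h⟩
  exact hZ.mono fun Y hY => hY.step

lemma ses_id (X : ModuleCat.{u} R) :
    SES (R := R) (Y := ModuleCat.of R PUnit) (LinearMap.id : X →ₗ[R] X) 0 :=
  ⟨fun _ _ h => h, fun x => ⟨fun _ => ⟨x, rfl⟩, fun _ => rfl⟩, fun _ => ⟨0, rfl⟩⟩

lemma GP.of_projective (X : ModuleCat.{u} R) (h : Module.Projective R X) : GP X := by
  refine ⟨fun X => Module.Projective R X, fun X h => ⟨fun Q _ k => ev_proj X Q k, X, _, _, _, h,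
    ses_id X, ?_⟩, h⟩
  change Module.Projective R PUnit.{u+1}
  infer_instance

lemma SES.precomp {X X' E Y : ModuleCat.{u} R} {i : X →ₗ[R] E} {p : E →ₗ[R] Y} (h : SES i p)
    (e : X' ≃ₗ[R] X) : SES (i.comp e.toLinearMap) p := by
  refine ⟨h.1.comp e.injective, fun x => ?_, h.2.2⟩
  rw [h.2.1 x]
  constructor
  · rintro ⟨y, rfl⟩; exact ⟨e.symm y, by simp⟩
  · rintro ⟨y, rfl⟩; exact ⟨e y, rfl⟩

lemma SES.postcomp {X E Y Y' : ModuleCat.{u} R} {i : X →ₗ[R] E} {p : E →ₗ[R] Y} (h : SES i p)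
    (e : Y ≃ₗ[R] Y') : SES i (e.toLinearMap.comp p) := by
  refine ⟨h.1, fun x => ?_, e.surjective.comp h.2.2⟩
  rw [← h.2.1 x]
  simp

lemma Perp.iso {X Y : ModuleCat.{u} R} (e : X ≃ₗ[R] Y) (h : Perp X) : Perp Y := by
  intro Q hQ k
  refine SES.ev_mid (i := e.toLinearMap) (p := (0 : Y →ₗ[R] (ModuleCat.of R PUnit : ModuleCat.{u} R))) ?_ (h Q hQ k) ?_
  · exact (ses_id Y).precomp e
  · have : Module.Projective R (ModuleCat.of R PUnit : ModuleCat.{u} R) := by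
      change Module.Projective R PUnit.{u+1}
      infer_instance
    exact ev_proj _ _ _

lemma GP.iso {X Y : ModuleCat.{u} R} (e : X ≃ₗ[R] Y) (h : GP X) : GP Y := by
  obtain ⟨hp, P, Z, i, p, h1, h2, h3⟩ := h.step
  exact GP.of_step ⟨hp.iso e, P, Z, _, _, h1, h2.precomp e.symm, h3⟩

lemma ses_ker {X Y : ModuleCat.{u} R} (f : X →ₗ[R] Y) (hf : Function.Surjective f) :
    SES (X := ModuleCat.of R (LinearMap.ker f)) (LinearMap.ker f).subtype f :=
  ⟨Subtype.val_injective, fun x => ⟨fun h => ⟨⟨x, h⟩, rfl⟩, by rintro ⟨y, rfl⟩; exact y.2⟩, hf⟩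

lemma ses_coker {X Y : ModuleCat.{u} R} (f : X →ₗ[R] Y) (hf : Function.Injective f) :
    SES (Y := ModuleCat.of R (Y ⧸ LinearMap.range f)) f (LinearMap.range f).mkQ :=
  ⟨hf, fun x => by simp, Submodule.mkQ_surjective _⟩

/-- Extension closure. -/
lemma GP.ext_closed {X E Y : ModuleCat.{u} R} {i : X →ₗ[R] E} {p : E →ₗ[R] Y} (h : SES i p)
    (hX : GP X) (hY : GP Y) : GP E := by
  refine ⟨fun E => ∃ (X Y : ModuleCat.{u} R) (i : X →ₗ[R] E) (p : E →ₗ[R] Y),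
    SES i p ∧ GP X ∧ GP Y, ?_, X, Y, i, p, h, hX, hY⟩
  clear h hX hY
  clear i p X Y E
  rintro E ⟨X, Y, i, p, h, hX, hY⟩
  refine ⟨fun Q hQ k => h.ev_mid (hX.perp Q hQ k) (hY.perp Q hQ k), ?_⟩
  obtain ⟨-, P1, X1, a, q, hP1, hs1, hX1⟩ := hX.step
  obtain ⟨-, P2, Y1, b, r, hP2, hs2, hY1⟩ := hY.step
  obtain ⟨f, hf⟩ := h.extend (hY.perp P1 hP1 0) a
  let P : ModuleCat.{u} R := ModuleCat.of R (P1 × P2)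
  let j : E →ₗ[R] P := LinearMap.prod f (b.comp p)
  have hj : Function.Injective j := by
    rw [injective_iff_map_eq_zero]
    intro e he
    have h1 : f e = 0 := congrArg Prod.fst he
    have h2 : b (p e) = 0 := congrArg Prod.snd he
    have h3 : p e = 0 := hs2.1 (by simpa using h2)
    obtain ⟨x, rfl⟩ := (h.2.1 e).1 h3
    rw [hf] at h1
    rw [hs1.1 (h1.trans (map_zero a).symm), map_zero]
  have hP : Module.Projective R P := by
    change Module.Projective R (P1 × P2)
    infer_instance
  let u1 : P1 →ₗ[R] (P ⧸ LinearMap.range j) :=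
    (LinearMap.range j).mkQ.comp (LinearMap.inl R P1 P2)
  have hu : LinearMap.ker q = LinearMap.ker u1 := by
    ext x
    rw [LinearMap.mem_ker, hs1.2.1 x, LinearMap.mem_ker]
    change _ ↔ (LinearMap.range j).mkQ ((x, 0) : P1 × P2) = 0
    rw [Submodule.mkQ_apply, Submodule.Quotient.mk_eq_zero]
    constructor
    · rintro ⟨y, rfl⟩
      refine ⟨i y, ?_⟩
      change (f (i y), b (p (i y))) = _
      rw [hf, h.2.1.apply_apply_eq_zero, map_zero]
    · rintro ⟨e, he⟩
      have h1 : f e = x := congrArg Prod.fst he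
      have h2 : b (p e) = 0 := congrArg Prod.snd he
      have h3 : p e = 0 := hs2.1 (by simpa using h2)
      obtain ⟨y, rfl⟩ := (h.2.1 e).1 h3
      exact ⟨y, by rw [← h1, hf]⟩
  let v0 : (P ⧸ LinearMap.range j) →ₗ[R] Y1 :=
    (LinearMap.range j).liftQ (r.comp (LinearMap.snd R P1 P2)) (by
      rintro _ ⟨e, rfl⟩
      change r (b (p e)) = 0
      exact hs2.2.1.apply_apply_eq_zero _)
  let eq : (P1 ⧸ LinearMap.ker q) ≃ₗ[R] X1 := q.quotKerEquivOfSurjective hs1.2.2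
  let u2 : X1 →ₗ[R] (P ⧸ LinearMap.range j) :=
    ((LinearMap.ker q).liftQ u1 hu.le).comp eq.symm.toLinearMap
  have hu2 : ∀ x, u2 (q x) = u1 x := by
    intro x
    have : eq.symm (q x) = (LinearMap.ker q).mkQ x := by
      rw [LinearEquiv.symm_apply_eq]; rfl
    change (LinearMap.ker q).liftQ u1 hu.le (eq.symm (q x)) = _
    rw [this]; rfl
  refine ⟨P, ModuleCat.of R (P ⧸ LinearMap.range j), j, _, hP, ses_coker j hj, 
    X1, Y1, u2, v0, ⟨?_, ?_, ?_⟩, hX1, hY1⟩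
  · rw [injective_iff_map_eq_zero]
    intro x hx
    obtain ⟨y, rfl⟩ := hs1.2.2 x
    rw [hu2] at hx
    have : y ∈ LinearMap.ker q := hu ▸ hx
    exact this
  · intro z
    obtain ⟨⟨z1, z2⟩, rfl⟩ := Submodule.mkQ_surjective _ z
    change r z2 = 0 ↔ _
    rw [hs2.2.1 z2]
    constructor
    · rintro ⟨y, rfl⟩
      obtain ⟨e, rfl⟩ := h.2.2 y
      refine ⟨q (z1 - f e), ?_⟩
      rw [hu2]
      refine (Submodule.Quotient.eq _).2 ⟨-e, ?_⟩
      refine Prod.ext ?_ ?_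
      · change f (-e) = (z1 - f e) - z1
        simp
      · change b (p (-e)) = 0 - b (p e)
        simp
    · rintro ⟨x, hx⟩
      obtain ⟨y, rfl⟩ := hs1.2.2 x
      rw [hu2] at hx
      obtain ⟨e, he⟩ := (Submodule.Quotient.eq _).1 hx
      have h2 : b (p e) = 0 - z2 := congrArg Prod.snd he
      exact ⟨p (-e), by simp [h2]⟩
  · intro y
    obtain ⟨x, rfl⟩ := hs2.2.2 y
    exact ⟨(LinearMap.range j).mkQ ((0, x) : P1 × P2), rfl⟩

/-- cancellation of projective summands -/
lemma GP.of_prod {P M : ModuleCat.{u} R} (hP : Module.Projective R P) (hM : Perp M)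
    (h : GP (ModuleCat.of R (P × M))) : GP M := by
  obtain ⟨-, Q, G, i, p, hQ, hs, hG⟩ := h.step
  let j : M →ₗ[R] Q := i.comp (LinearMap.inr R P M)
  have hj : Function.Injective j := hs.1.comp LinearMap.inr_injective
  refine GP.of_step ⟨hM, Q, _, j, _, hQ, ses_coker j hj, ?_⟩
  let a : P →ₗ[R] (Q ⧸ LinearMap.range j) :=
    (LinearMap.range j).mkQ.comp (i.comp (LinearMap.inl R P M))
  let b : (Q ⧸ LinearMap.range j) →ₗ[R] G := (LinearMap.range j).liftQ p (by
    rintro _ ⟨m, rfl⟩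
    exact hs.2.1.apply_apply_eq_zero _)
  refine GP.ext_closed (X := P) (Y := G) (i := a) (p := b) ⟨?_, ?_, ?_⟩
    (GP.of_projective P hP) hG
  · rw [injective_iff_map_eq_zero]
    intro x hx
    obtain ⟨m, hm⟩ := (Submodule.Quotient.mk_eq_zero _).1 hx
    have := hs.1 hm
    exact (congrArg Prod.fst this).symm
  · intro z
    obtain ⟨z, rfl⟩ := Submodule.mkQ_surjective _ z
    change p z = 0 ↔ _
    rw [hs.2.1 z]
    constructor
    · rintro ⟨⟨x, m⟩, rfl⟩
      refine ⟨x, ?_⟩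
      refine (Submodule.Quotient.eq _).2 ⟨-m, ?_⟩
      change i ((0, -m) : P × M) = i ((x, 0) : P × M) - i ((x, m) : P × M)
      rw [← map_sub]
      congr 1
      exact Prod.ext (by simp) (by simp)
    · rintro ⟨x, hx⟩
      obtain ⟨m, hm⟩ := (Submodule.Quotient.eq _).1 hx
      change i ((0, m) : P × M) = i ((x, 0) : P × M) - z at hm
      refine ⟨((x, -m) : P × M), ?_⟩
      have : z = i ((x, 0) : P × M) - i ((0, m) : P × M) := by rw [hm]; abel
      rw [this, ← map_sub]
      congr 1
      exact Prod.ext (by simp) (by simp)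
  · intro g
    obtain ⟨x, rfl⟩ := hs.2.2 g
    exact ⟨(LinearMap.range j).mkQ x, rfl⟩

lemma GP.of_ses {K G M : ModuleCat.{u} R} {i : K →ₗ[R] G} {p : G →ₗ[R] M} (h : SES i p)
    (hK : GP K) (hG : GP G) (hM : Perp M) : GP M := by
  obtain ⟨-, P, K', a, q, hP, hs, hK'⟩ := hK.step
  obtain ⟨f, hf⟩ := h.extend (hM P hP 0) a
  refine GP.of_prod hP hM ?_
  let j : G →ₗ[R] (ModuleCat.of R (P × M) : ModuleCat.{u} R) := LinearMap.prod f p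
  have hj : Function.Injective j := by
    rw [injective_iff_map_eq_zero]
    intro e he
    have h1 : f e = 0 := congrArg Prod.fst he
    have h2 : p e = 0 := congrArg Prod.snd he
    obtain ⟨x, rfl⟩ := (h.2.1 e).1 h2
    rw [hf] at h1
    rw [hs.1 (h1.trans (map_zero a).symm), map_zero]
  refine GP.ext_closed (ses_coker j hj) hG ?_
  let c : P →ₗ[R] ((P × M) ⧸ LinearMap.range j) :=
    (LinearMap.range j).mkQ.comp (LinearMap.inl R P M)
  have hc : Function.Surjective c := by
    intro z
    obtain ⟨⟨x, m⟩, rfl⟩ := Submodule.mkQ_surjective _ z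
    obtain ⟨g, rfl⟩ := h.2.2 m
    refine ⟨x - f g, ?_⟩
    refine (Submodule.Quotient.eq _).2 ⟨-g, ?_⟩
    refine Prod.ext ?_ ?_
    · change f (-g) = (x - f g) - x
      simp
    · change p (-g) = 0 - p g
      simp
  have hk : LinearMap.ker q = LinearMap.ker c := by
    ext x
    rw [LinearMap.mem_ker, hs.2.1 x, LinearMap.mem_ker]
    change _ ↔ (LinearMap.range j).mkQ ((x, 0) : P × M) = 0
    rw [Submodule.mkQ_apply, Submodule.Quotient.mk_eq_zero]
    constructor
    · rintro ⟨y, rfl⟩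
      refine ⟨i y, ?_⟩
      change (f (i y), p (i y)) = _
      rw [hf, h.2.1.apply_apply_eq_zero]
    · rintro ⟨e, he⟩
      have h1 : f e = x := congrArg Prod.fst he
      have h2 : p e = 0 := congrArg Prod.snd he
      obtain ⟨y, rfl⟩ := (h.2.1 e).1 h2
      exact ⟨y, by rw [← h1, hf]⟩
  exact GP.iso ((q.quotKerEquivOfSurjective hs.2.2).symm.trans
    ((Submodule.quotEquivOfEq _ _ hk).trans (c.quotKerEquivOfSurjective hc))) hK'

end GorAux

namespace GorAux

open CategoryTheory CategoryTheory.Abelian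

variable {R : Type u} [Ring R]

lemma SES.factor {X E Y : ModuleCat.{u} R} {i : X →ₗ[R] E} {p : E →ₗ[R] Y} (h : SES i p)
    {Q : ModuleCat.{u} R} (g : E →ₗ[R] Q) (hg : ∀ x, g (i x) = 0) :
    ∃ g' : Y →ₗ[R] Q, ∀ x, g' (p x) = g x := by
  let e : (E ⧸ LinearMap.ker p) ≃ₗ[R] Y := p.quotKerEquivOfSurjective h.2.2
  have hk : LinearMap.ker p ≤ LinearMap.ker g := by
    intro x hx
    obtain ⟨y, rfl⟩ := (h.2.1 x).1 hx
    exact hg y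
  refine ⟨((LinearMap.ker p).liftQ g hk).comp e.symm.toLinearMap, fun x => ?_⟩
  have : e.symm (p x) = (LinearMap.ker p).mkQ x := by
    rw [LinearEquiv.symm_apply_eq]; rfl
  change (LinearMap.ker p).liftQ g hk (e.symm (p x)) = _
  rw [this]; rfl

/-- `Z` is a syzygy of `X`. -/
def Rel (Z X : ModuleCat.{u} R) : Prop :=
  ∃ (P : ModuleCat.{u} R) (i : Z →ₗ[R] P) (p : P →ₗ[R] X), Module.Projective R P ∧ SES i p

lemma GP.syz {X Z : ModuleCat.{u} R} (h : Rel Z X) (hX : GP X) : GP Z := by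
  obtain ⟨P, i, p, hP, hs⟩ := h
  exact GP.of_step ⟨fun Q hQ k => hs.ev_left (ev_proj P Q k) (hX.perp Q hQ (k + 1)),
    P, X, i, p, hP, hs, hX⟩

/-- free cover -/
noncomputable def cover (X : ModuleCat.{u} R) :
    (ModuleCat.of R (X →₀ R) : ModuleCat.{u} R) →ₗ[R] X :=
  Finsupp.linearCombination R id

lemma cover_surj (X : ModuleCat.{u} R) : Function.Surjective (cover X) :=
  Finsupp.linearCombination_id_surjective R X

lemma cover_proj (X : ModuleCat.{u} R) :
    Module.Projective R (ModuleCat.of R (X →₀ R) : ModuleCat.{u} R) := by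
  change Module.Projective R (X →₀ R)
  infer_instance

lemma int_seq {α : Type*} (r : α → α → Prop) (h1 : ∀ x, ∃ z, r z x) (h2 : ∀ x, ∃ y, r x y)
    (x : α) : ∃ S : ℤ → α, S 1 = x ∧ ∀ i, r (S (i + 1)) (S i) := by
  choose a ha using h1
  choose b hb using h2
  let F : ℕ → α := fun n => a^[n] x
  let B : ℕ → α := fun n => b^[n + 1] x
  let S : ℤ → α := fun i => match i with
    | Int.ofNat 0 => B 0
    | Int.ofNat (n + 1) => F n
    | Int.negSucc n => B (n + 1)
  refine ⟨S, rfl, ?_⟩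
  rintro ((_ | n) | (_ | n))
  · exact hb x
  · change r (a^[n + 1] x) (a^[n] x)
    rw [Function.iterate_succ_apply']
    exact ha _
  · change r (b^[1] x) (b^[2] x)
    exact hb _
  · have : (Int.negSucc (n + 1) + 1) = Int.negSucc n := by omega
    rw [this]
    change r (b^[n + 1 + 1] x) (b^[n + 1 + 1 + 1] x)
    rw [Function.iterate_succ_apply' b (n + 1 + 1)]
    exact hb _

lemma GP.isGP {X : ModuleCat.{u} R} (h : GP X) : IsGorensteinProjective R X := by
  obtain ⟨S, hS1, hS⟩ := int_seq (α := {X : ModuleCat.{u} R // GP X}) (fun Z X => Rel Z.1 X.1)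
    (fun X => by
      have : Rel (ModuleCat.of R (LinearMap.ker (cover X.1))) X.1 :=
        ⟨_, _, cover X.1, cover_proj X.1, ses_ker _ (cover_surj X.1)⟩
      exact ⟨⟨_, X.2.syz this⟩, this⟩)
    (fun X => by
      obtain ⟨-, P, Y, i, p, h1, h2, h3⟩ := X.2.step
      exact ⟨⟨Y, h3⟩, P, i, p, h1, h2⟩) ⟨X, h⟩
  choose P i p hP hs using hS
  refine ⟨P, fun k => (i k).comp (p (k + 1)), hP, ?_, ?_, ?_, ?_⟩
  · intro k
    ext x
    change i k (p (k + 1) (i (k + 1) _)) = 0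
    rw [(hs (k + 1)).2.1.apply_apply_eq_zero, map_zero]
  · intro k
    ext x
    rw [LinearMap.mem_ker]
    change _ ↔ i k (p (k + 1) x) = 0
    rw [map_eq_zero_iff _ (hs k).1, (hs (k + 1)).2.1 x]
    constructor
    · rintro ⟨y, rfl⟩; exact ⟨_, rfl⟩
    · rintro ⟨y, rfl⟩
      obtain ⟨z, rfl⟩ := (hs (k + 1 + 1)).2.2 y
      exact ⟨z, rfl⟩
  · intro Q hQ k g hg
    obtain ⟨g', hg'⟩ := (hs (k + 1)).factor g (fun x => by
      obtain ⟨z, rfl⟩ := (hs (k + 1 + 1)).2.2 x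
      exact LinearMap.congr_fun hg z)
    obtain ⟨f, hf⟩ := (hs k).extend ((S k).2.perp Q hQ 0) g'
    refine ⟨f, LinearMap.ext fun x => ?_⟩
    change f (i k (p (k + 1) x)) = g x
    rw [hf, hg']
  · have hX : X = (S (-1 + 1 + 1)).1 := by
      change X = (S 1).1
      rw [hS1]
    have hker : LinearMap.ker ((i (-1)).comp (p (-1 + 1))) = LinearMap.range (i (-1 + 1)) := by
      ext x
      rw [LinearMap.mem_ker]
      change i (-1) (p (-1 + 1) x) = 0 ↔ _
      rw [map_eq_zero_iff _ (hs (-1)).1, (hs (-1 + 1)).2.1 x]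
      rfl
    rw [hX]
    exact ⟨(LinearEquiv.ofInjective _ (hs (-1 + 1)).1).trans (LinearEquiv.ofEq _ _ hker.symm)⟩

lemma GP.of_isGP {X : ModuleCat.{u} R} (h : IsGorensteinProjective R X) : GP X := by
  obtain ⟨P, f, hP, hc, he, hh, ⟨e⟩⟩ := h
  let K : ℤ → ModuleCat.{u} R := fun i => ModuleCat.of R (LinearMap.ker (f i))
  have hm : ∀ i x, f (i + 1) x ∈ LinearMap.ker (f i) := fun i x => LinearMap.congr_fun (hc i) x
  let q : ∀ i, P (i + 1 + 1) →ₗ[R] K i := fun i => (f (i + 1)).codRestrict _ (hm i)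
  let s : ∀ i, K i →ₗ[R] P (i + 1) := fun i => (LinearMap.ker (f i)).subtype
  have hs : ∀ i, SES (s (i + 1)) (q i) := by
    intro i
    refine ⟨Subtype.val_injective, fun x => ⟨fun h => ⟨⟨x, congrArg Subtype.val h⟩, rfl⟩, ?_⟩, ?_⟩
    · rintro ⟨y, rfl⟩; exact Subtype.ext y.2
    · rintro ⟨y, hy⟩
      rw [← he] at hy
      obtain ⟨x, rfl⟩ := hy
      exact ⟨x, rfl⟩
  have hev : ∀ Q : ModuleCat.{u} R, Module.Projective R Q → ∀ k i, EV (k + 1) (K i) Q := by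
    intro Q hQ k
    induction k with
    | zero =>
      intro i
      have := hP (i + 1 + 1)
      refine (hs i).ev_one fun g => ?_
      obtain ⟨h, hh⟩ := hh Q hQ (i + 1 + 1) (g.comp (q (i + 1))) (by
        ext x
        change g (q (i + 1) _) = 0
        have : q (i + 1) (f (i + 1 + 1 + 1) x) = 0 := Subtype.ext (LinearMap.congr_fun (hc _) x)
        rw [this, map_zero])
      refine ⟨h, fun x => ?_⟩
      obtain ⟨y, rfl⟩ := (hs (i + 1)).2.2 x
      exact LinearMap.congr_fun hh y
    | succ k ih =>
      intro i
      have := hP (i + 1 + 1)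
      exact (hs i).ev_right (ih _) (ev_proj _ _ _)
  refine GP.iso e.symm (X := K (-1)) ⟨fun X => ∃ i, X = K i, ?_, -1, rfl⟩
  rintro _ ⟨i, rfl⟩
  obtain ⟨j, rfl⟩ : ∃ j, i = j + 1 := ⟨i - 1, by omega⟩
  exact ⟨fun Q hQ k => hev Q hQ k _, _, _, _, _, hP _, hs j, j, rfl⟩

section Res
variable {M : ModuleCat.{u} R} (res : ProjectiveRes R M)

/-- syzygies -/
def syz : ℕ → ModuleCat.{u} R
  | 0 => M
  | n + 1 => ModuleCat.of R (LinearMap.range (res.d n))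

/-- cover of syzygies -/
def ep : ∀ n, res.P n →ₗ[R] syz res n
  | 0 => res.ε
  | n + 1 => (res.d n).rangeRestrict

/-- inclusion of syzygies -/
def inc (n : ℕ) : syz res (n + 1) →ₗ[R] res.P n := (LinearMap.range (res.d n)).subtype

lemma inc_ep (n : ℕ) (x) : inc res n (ep res (n + 1) x) = res.d n x := rfl

lemma syz_ses (n : ℕ) : SES (inc res n) (ep res n) := by
  refine ⟨Subtype.val_injective, ?_, ?_⟩
  · intro x
    have : x ∈ LinearMap.range (res.d n) ↔ ep res n x = 0 := by
      cases n with
      | zero => rw [res.exact_zero]; rfl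
      | succ n =>
        rw [res.exact_succ]
        exact ⟨fun h => Subtype.ext h, fun h => congrArg Subtype.val h⟩
    rw [← this]
    constructor
    · intro h; exact ⟨⟨x, h⟩, rfl⟩
    · rintro ⟨y, rfl⟩; exact y.2
  · cases n with
    | zero => exact res.surj
    | succ n => exact LinearMap.surjective_rangeRestrict _

lemma ev_syz (Q : ModuleCat.{u} R) (n k : ℕ) : EV (k + 1) (syz res n) Q ↔ EV (n + k + 1) M Q := by
  induction n generalizing k with
  | zero => rw [zero_add]; rfl
  | succ n ih =>
    have := res.projective n
    have h := ih (k + 1)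
    rw [show n + 1 + k = n + (k + 1) by omega, ← h]
    exact ⟨fun h => (syz_ses res n).ev_right h (ev_proj _ _ _),
      fun h => (syz_ses res n).ev_left (ev_proj _ _ _) h⟩

lemma res_exact_iff (Q : ModuleCat.{u} R) (j : ℕ) : EV (j + 1) M Q ↔
    ∀ g : res.P (j + 1) →ₗ[R] Q,
    g.comp (res.d (j + 1)) = 0 → ∃ h : res.P j →ₗ[R] Q, h.comp (res.d j) = g := by
  have h0 := ev_syz res Q j 0
  rw [add_zero, zero_add] at h0
  rw [← h0]
  constructor
  · intro hE g hg
    obtain ⟨g', hg'⟩ := (syz_ses res (j + 1)).factor g (fun x => by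
      obtain ⟨z, rfl⟩ := (syz_ses res (j + 1 + 1)).2.2 x
      exact LinearMap.congr_fun hg z)
    obtain ⟨f, hf⟩ := (syz_ses res j).extend hE g'
    exact ⟨f, LinearMap.ext fun x => (hf (ep res (j + 1) x)).trans (hg' x)⟩
  · intro hh
    have := res.projective j
    refine (syz_ses res j).ev_one fun g => ?_
    obtain ⟨h, hh⟩ := hh (g.comp (ep res (j + 1))) (by
      ext x
      change g (ep res (j + 1) (inc res (j + 1) (ep res (j + 1 + 1) x))) = 0
      rw [(syz_ses res (j + 1)).2.1.apply_apply_eq_zero, map_zero])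
    refine ⟨h, fun x => ?_⟩
    obtain ⟨y, rfl⟩ := (syz_ses res (j + 1)).2.2 x
    exact LinearMap.congr_fun hh y

end Res

/-- free syzygies -/
noncomputable def fsyz (M : ModuleCat.{u} R) : ℕ → ModuleCat.{u} R
  | 0 => M
  | n + 1 => ModuleCat.of R (LinearMap.ker (cover (fsyz M n)))

/-- the free resolution -/
noncomputable def freeRes (M : ModuleCat.{u} R) : ProjectiveRes R M where
  P n := ModuleCat.of R (fsyz M n →₀ R)
  d n := (LinearMap.ker (cover (fsyz M n))).subtype.comp (cover (fsyz M (n + 1)))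
  ε := cover (fsyz M 0)
  projective n := cover_proj _
  surj := cover_surj _
  exact_zero := by
    ext x
    constructor
    · rintro ⟨y, rfl⟩; exact (cover (fsyz M 1) y).2
    · intro h
      obtain ⟨y, hy⟩ := cover_surj (fsyz M 1) ⟨x, h⟩
      exact ⟨y, congrArg Subtype.val hy⟩
  exact_succ n := by
    ext x
    constructor
    · rintro ⟨y, rfl⟩; exact congrArg Subtype.val (cover (fsyz M (n + 2)) y).2
    · intro h
      obtain ⟨y, hy⟩ := cover_surj (fsyz M (n + 2)) ⟨x, Subtype.ext h⟩
      exact ⟨y, congrArg Subtype.val hy⟩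

lemma ev_of_ext {M Q : ModuleCat.{u} R} {j : ℕ} (h : ExtSuccVanishes R M Q j) : EV (j + 1) M Q :=
  (res_exact_iff (freeRes M) Q j).2 (h _)

lemma gpdim_ev (n : ℕ) (M : ModuleCat.{u} R) (h : GPdimLE R n M) (Q : ModuleCat.{u} R)
    (hQ : Module.Projective R Q) (j : ℕ) : EV (n + j + 1) M Q := by
  induction n generalizing M with
  | zero => rw [zero_add]; exact (GP.of_isGP h).perp Q hQ j
  | succ n ih =>
    obtain ⟨G, f, hf, hG, hK⟩ := h
    rw [show n + 1 + j = n + j + 1 by omega]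
    exact (ses_ker f hf).ev_right (ih _ hK) ((GP.of_isGP hG).perp Q hQ _)

lemma gp_gpdim (n : ℕ) (M : ModuleCat.{u} R) (h : GP M) : GPdimLE R n M := by
  induction n generalizing M with
  | zero => exact h.isGP
  | succ n ih =>
    refine ⟨M, LinearMap.id, Function.surjective_id, h.isGP, ih _ (GP.of_projective _ ?_)⟩
    change Module.Projective R (LinearMap.ker (LinearMap.id : M →ₗ[R] M))
    rw [LinearMap.ker_id]
    infer_instance

lemma gp_of_gpdim (m : ℕ) (M : ModuleCat.{u} R) (h : GPdimLE R m M) (hp : Perp M) : GP M := by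
  induction m generalizing M with
  | zero => exact GP.of_isGP h
  | succ n ih =>
    obtain ⟨G, f, hf, hG, hK⟩ := h
    have hs := ses_ker f hf
    have hG := GP.of_isGP hG
    exact GP.of_ses hs (ih _ hK fun Q hQ k => hs.ev_left (hG.perp Q hQ k) (hp Q hQ (k + 1))) hG hp

lemma gpdim_le (n m : ℕ) (M : ModuleCat.{u} R) (h : GPdimLE R m M)
    (hE : ∀ Q : ModuleCat.{u} R, Module.Projective R Q → ∀ j, EV (n + j + 1) M Q) :
    GPdimLE R n M := by
  induction n generalizing m M with
  | zero => exact (gp_of_gpdim m M h fun Q hQ k => by simpa using hE Q hQ k).isGP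
  | succ n ih =>
    cases m with
    | zero => exact gp_gpdim _ _ (GP.of_isGP h)
    | succ m =>
      obtain ⟨G, f, hf, hG, hK⟩ := h
      refine ⟨G, f, hf, hG, ih m _ hK fun Q hQ j => ?_⟩
      have := hE Q hQ j
      rw [show n + 1 + j = n + j + 1 by omega] at this
      exact (ses_ker f hf).ev_left ((GP.of_isGP hG).perp Q hQ _) this

lemma gpdim_exists {M : ModuleCat.{u} R} (h : GPdim R M ≠ ⊤) :
    ∃ m : ℕ, GPdim R M = m ∧ GPdimLE R m M := by
  have hne : {k : ℕ∞ | ∃ n : ℕ, k = (n : ℕ∞) ∧ GPdimLE R n M}.Nonempty := by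
    rw [Set.nonempty_iff_ne_empty]
    intro he
    exact h (by rw [GPdim, he, sInf_empty])
  exact csInf_mem hne

lemma main1 (M : ModuleCat.{u} R) (n : ℕ) (h : GPdim R M ≠ ⊤)
    (hE : ∀ Q : ModuleCat.{u} R, Module.Projective R Q → ∀ j, ExtSuccVanishes R M Q (n + j)) :
    GPdim R M ≤ n := by
  obtain ⟨m, -, hm⟩ := gpdim_exists h
  exact sInf_le ⟨n, rfl, gpdim_le n m M hm fun Q hQ j => ev_of_ext (hE Q hQ j)⟩

end GorAux

namespace GorAux

section Frob

variable {R A : Type u} [Ring R] [Ring A]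

lemma proj_trans {P : Type u} [AddCommGroup P] [Module A P] [Module R A] [Module R P]
    [IsScalarTower R A P] [IsScalarTower R A A] [Module.Projective R A]
    [Module.Projective A P] : Module.Projective R P := by
  obtain ⟨s, hs⟩ := Module.projective_def'.1 (inferInstance : Module.Projective A P)
  classical
  have hfin : Module.Projective R (P →₀ A) :=
    Module.Projective.of_equiv (finsuppLequivDFinsupp R (ι := P) (M := A)).symm
  refine Module.Projective.of_split (P := P) (M := P →₀ A) (s.restrictScalars R)
    ((Finsupp.linearCombination A id).restrictScalars R) ?_
  ext x
  exact LinearMap.congr_fun hs x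

/-- restriction of scalars -/
abbrev rs (ι : R →+* A) (X : ModuleCat.{u} A) : ModuleCat.{u} R :=
  @ModuleCat.of R _ X _ (Module.compHom X ι)

/-- restriction of scalars on maps -/
def rmap (ι : R →+* A) {X Y : ModuleCat.{u} A} (f : X →ₗ[A] Y) : rs ι X →ₗ[R] rs ι Y where
  toFun := f
  map_add' := f.map_add
  map_smul' r x := f.map_smul (ι r) x

lemma rs_proj (ι : R →+* A) (hF : IsFrobeniusExtension ι) (X : ModuleCat.{u} A)
    (hX : Module.Projective A X) : Module.Projective R (rs ι X) := by
  obtain ⟨-, τ, n, x, y, h1, h2, h3, h4⟩ := hF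
  let _ : Module R A := Module.compHom A ι
  let _ : Module R X := Module.compHom X ι
  have hsm : ∀ (r : R) (a : A), r • a = ι r * a := fun _ _ => rfl
  have hsm' : ∀ (r : R) (a : X), r • a = ι r • a := fun _ _ => rfl
  have : IsScalarTower R A A := ⟨fun r a b => by simp [hsm, mul_assoc]⟩
  have : IsScalarTower R A X := ⟨fun r a b => by rw [hsm, hsm', mul_smul]⟩
  have : Module.Projective R A := by
    let f : A →ₗ[R] (Fin n → R) :=
      { toFun := fun a i => τ (a * x i)
        map_add' := fun a b => by ext i; simp [add_mul]
        map_smul' := fun r a => by ext i; simp [hsm, mul_assoc, h1] }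
    let g : (Fin n → R) →ₗ[R] A :=
      { toFun := fun c => ∑ i, ι (c i) * y i
        map_add' := fun a b => by simp [add_mul, Finset.sum_add_distrib]
        map_smul' := fun r a => by simp [hsm, mul_assoc, Finset.mul_sum] }
    exact Module.Projective.of_split f g (LinearMap.ext fun a => h4 a)
  exact proj_trans (A := A)

/-- restriction of a resolution -/
def rsRes (ι : R →+* A) (hF : IsFrobeniusExtension ι) {M : ModuleCat.{u} A}
    (res : ProjectiveRes A M) : ProjectiveRes R (rs ι M) where
  P n := rs ι (res.P n)
  d n := rmap ι (res.d n)
  ε := rmap ι res.ε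
  projective n := rs_proj ι hF _ (res.projective n)
  surj := res.surj
  exact_zero := by
    ext x
    exact SetLike.ext_iff.1 res.exact_zero x
  exact_succ n := by
    ext x
    exact SetLike.ext_iff.1 (res.exact_succ n) x

lemma ext_transfer (ι : R →+* A) (hF : IsFrobeniusExtension ι) (M : ModuleCat.{u} A) (j : ℕ)
    (hE : ∀ Q : ModuleCat.{u} R, Module.Projective R Q → EV (j + 1) (rs ι M) Q)
    (Q : ModuleCat.{u} A) (hQ : Module.Projective A Q) : ExtSuccVanishes A M Q j := by
  intro res g hg
  have hex := (res_exact_iff (rsRes ι hF res) (ModuleCat.of R (Q →₀ R)) j).1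
    (hE _ (by change Module.Projective R (Q →₀ R); infer_instance))
  have hF' := hF
  obtain ⟨-, τ, n, x, y, h1, h2, h3, h4⟩ := hF'
  obtain ⟨s, hs⟩ := Module.projective_def'.1 hQ
  let σ : rs ι Q →ₗ[R] (ModuleCat.of R (Q →₀ R) : ModuleCat.{u} R) :=
    { toFun := fun q => (s q).mapRange τ τ.map_zero
      map_add' := fun a b => by
        refine Finsupp.ext fun k => ?_
        change τ (s (a + b) k) = τ (s a k) + τ (s b k)
        rw [map_add, Finsupp.add_apply, map_add]
      map_smul' := fun r a => by
        refine Finsupp.ext fun k => ?_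
        change τ (s (ι r • a) k) = r * τ (s a k)
        rw [map_smul, Finsupp.smul_apply, smul_eq_mul, h1] }
  let ρ : (ModuleCat.of R (Q →₀ R) : ModuleCat.{u} R) →ₗ[R] rs ι Q :=
    Finsupp.linearCombination R (id : rs ι Q → rs ι Q)
  let ρ' : (Q →₀ R) →+ Q := ρ.toAddMonoidHom
  have hρs : ∀ (r : R) c, ρ' (r • c) = ι r • ρ' c := fun r c => ρ.map_smul r c
  have key0 : ∀ z : Q →₀ A, ∑ i, x i • ρ' ((y i • z).mapRange τ τ.map_zero) =
      Finsupp.linearCombination A id z := by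
    intro z
    induction z using Finsupp.induction_linear with
    | zero => simp
    | add z w hz hw =>
      rw [map_add, ← hz, ← hw, ← Finset.sum_add_distrib]
      refine Finset.sum_congr rfl fun i _ => ?_
      rw [smul_add, Finsupp.mapRange_add (map_add τ), map_add, smul_add]
    | single q a =>
      have : ∀ i, ρ' ((y i • Finsupp.single q a).mapRange τ τ.map_zero) =
          ι (τ (y i * a)) • q := by
        intro i
        rw [Finsupp.smul_single, Finsupp.mapRange_single, smul_eq_mul]
        exact Finsupp.linearCombination_single R (v := (id : rs ι Q → rs ι Q)) (τ (y i * a)) q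
      simp only [this, smul_smul]
      rw [← Finset.sum_smul, h3, Finsupp.linearCombination_single]
      rfl
  have key : ∀ q : Q, ∑ i, x i • ρ' (σ (y i • q : Q)) = q := by
    intro q
    have := key0 (s q)
    rw [show Finsupp.linearCombination A id (s q) = q from LinearMap.congr_fun hs q] at this
    conv_rhs => rw [← this]
    refine Finset.sum_congr rfl fun i _ => ?_
    change _ • ρ' ((s (y i • q)).mapRange τ τ.map_zero) = _
    rw [map_smul]
  obtain ⟨h', hh'⟩ := hex (σ.comp (rmap ι g)) (by
    refine LinearMap.ext fun p => ?_
    change σ (g (res.d (j + 1) p)) = 0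
    have : g (res.d (j + 1) p) = 0 := LinearMap.congr_fun hg p
    rw [this]
    exact map_zero σ)
  let h0 : res.P j →+ (Q →₀ R) := h'.toAddMonoidHom
  have h0s : ∀ (r : R) p, h0 (ι r • p) = r • h0 p := fun r p => h'.map_smul r p
  have h0d : ∀ p, h0 (res.d j p) = σ (g p) := fun p => LinearMap.congr_fun hh' p
  refine ⟨{ toFun := fun p => ∑ i, x i • ρ' (h0 (y i • p))
            map_add' := fun a b => by simp only [smul_add, map_add, Finset.sum_add_distrib]
            map_smul' := fun a p => ?_ }, ?_⟩
  · have e1 : ∀ i, ρ' (h0 (y i • a • p)) = ∑ k, ι (τ (y i * a * x k)) • ρ' (h0 (y k • p)) := by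
      intro i
      rw [smul_smul]
      conv_lhs => rw [← h4 (y i * a)]
      rw [Finset.sum_smul, map_sum, map_sum]
      refine Finset.sum_congr rfl fun k _ => ?_
      rw [mul_smul, h0s, hρs]
    simp only [e1, RingHom.id_apply, Finset.smul_sum]
    rw [Finset.sum_comm]
    refine Finset.sum_congr rfl fun k _ => ?_
    simp only [smul_smul]
    rw [← Finset.sum_smul]
    congr 1
    conv_rhs => rw [← h3 (a * x k)]
    simp only [mul_assoc]
  · refine LinearMap.ext fun p => ?_
    change ∑ i, x i • ρ' (h0 (y i • res.d j p)) = g p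
    conv_rhs => rw [← key (g p)]
    refine Finset.sum_congr rfl fun i _ => ?_
    rw [← LinearMap.map_smul (res.d j), h0d, LinearMap.map_smul g]

end Frob

end GorAux

section Statement

variable {R A : Type u} [Ring R] [Ring A]

theorem stmt16 (ι : R →+* A) (hF : IsFrobeniusExtension ι)
    (M : Type u) [AddCommGroup M] [Module A M] :
    (∀ n : ℕ, GPdim A (ModuleCat.of A M) ≠ ⊤ →
      (∀ P : ModuleCat.{u} A, Module.Projective A P →
        ∀ j : ℕ, ExtSuccVanishes A (ModuleCat.of A M) P (n + j)) →
      GPdim A (ModuleCat.of A M) ≤ (n : ℕ∞)) ∧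
    (∀ n : ℕ, GPdim A (ModuleCat.of A M) ≠ ⊤ →
      GPdim R (@ModuleCat.of R _ M _ (Module.compHom M ι)) = (n : ℕ∞) →
      (∀ P : ModuleCat.{u} A, Module.Projective A P →
        ∀ j : ℕ, ExtSuccVanishes A (ModuleCat.of A M) P (n + j)) ∧
      GPdim A (ModuleCat.of A M) ≤
        GPdim R (@ModuleCat.of R _ M _ (Module.compHom M ι))) := by
  refine ⟨fun n h hE => GorAux.main1 _ n h hE, fun n h hn => ?_⟩
  have hext : ∀ P : ModuleCat.{u} A, Module.Projective A P →
      ∀ j : ℕ, ExtSuccVanishes A (ModuleCat.of A M) P (n + j) := by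
    intro P hP j
    obtain ⟨m, hm, hm'⟩ := GorAux.gpdim_exists (R := R)
      (M := @ModuleCat.of R _ M _ (Module.compHom M ι)) (by rw [hn]; exact ENat.natCast_ne_top n)
    obtain rfl : m = n := by
      rw [hm] at hn
      exact_mod_cast hn
    exact GorAux.ext_transfer ι hF (ModuleCat.of A M) (m + j)
      (fun Q hQ => GorAux.gpdim_ev m _ hm' Q hQ j) P hP
  exact ⟨hext, hn.symm ▸ GorAux.main1 _ n h hext⟩

end Statement
end

section
/- Let R ⊂ A be a split Frobenius extension of rings. Then every projective left R-module has finite injective dimension over R if and only if every projective left A-module has finite injective dimension over A. -/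
universe u

section Frobenius

variable {R A : Type u} [Ring R] [Ring A]

/-- A ring extension `ι : R →+* A` is split if `R` is a direct summand of `A` as an
`R`-`R`-bimodule, i.e. there is an `R`-`R`-bimodule homomorphism `π : A → R` with
`π ∘ ι = id`. -/
def IsSplitExtension (ι : R →+* A) : Prop :=
  ∃ π : A →+ R,
    (∀ (r : R) (a : A), π (ι r * a) = r * π a) ∧
    (∀ (a : A) (r : R), π (a * ι r) = π a * r) ∧
    (∀ r : R, π (ι r) = r)

end Frobenius

/-- `idimLE R n M` means that `M` admits an injective coresolution of length `n`. -/
def idimLE (R : Type u) [Ring R] : ℕ → ModuleCat.{u} R → Prop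
  | 0, M => Module.Injective R M
  | n + 1, M => ∃ (G : ModuleCat.{u} R) (f : M →ₗ[R] G),
      Function.Injective f ∧ Module.Injective R G ∧
      idimLE R n (ModuleCat.of R (↥G ⧸ LinearMap.range f))

/-- The injective dimension of a left `R`-module, in `ℕ∞`. -/
noncomputable def idim (R : Type u) [Ring R] (M : ModuleCat.{u} R) : ℕ∞ :=
  sInf {k : ℕ∞ | ∃ n : ℕ, k = (n : ℕ∞) ∧ idimLE R n M}

section Helpers

open CategoryTheory Limits

theorem idimLE_iff_has (R : Type u) [Ring R] (n : ℕ) (M : ModuleCat.{u} R) :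
    idimLE R n M ↔ HasInjectiveDimensionLE M n := by
  induction n generalizing M with
  | zero =>
    simp only [idimLE, HasInjectiveDimensionLE, zero_add,
      ← injective_iff_hasInjectiveDimensionLT_one]
    exact Module.injective_iff_injective_object R M
  | succ n ih =>
    have key : ∀ (G : ModuleCat.{u} R) (f : M →ₗ[R] G), Function.Injective f →
        Module.Injective R G →
        (HasInjectiveDimensionLE (ModuleCat.of R (↥G ⧸ LinearMap.range f)) n ↔
          HasInjectiveDimensionLE M (n + 1)) := by
      intro G f hf hG
      have hG' : Injective G := (Module.injective_iff_injective_object R G).1 hG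
      let S : ShortComplex (ModuleCat.{u} R) :=
        ModuleCat.shortComplexOfCompEqZero _ _ f.exact_map_mkQ_range.linearMap_comp_eq_zero
      have exactS := ModuleCat.shortComplex_shortExact S
        f.exact_map_mkQ_range hf (Submodule.mkQ_surjective _)
      exact exactS.hasInjectiveDimensionLT_X₃_iff n hG'
    constructor
    · rintro ⟨G, f, hf, hG, h⟩
      exact (key G f hf hG).1 ((ih _).1 h)
    · intro h
      let ⟨I, _, f, _⟩ := EnoughInjectives.presentation M
      have hf : Function.Injective f.hom := (ModuleCat.mono_iff_injective f).mp ‹_›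
      have hI : Module.Injective R I := (Module.injective_iff_injective_object R I).2 ‹_›
      exact ⟨I, f.hom, hf, hI, (ih _).2 ((key I f.hom hf hI).2 h)⟩

theorem idim_ne_top_iff (R : Type u) [Ring R] (M : ModuleCat.{u} R) :
    idim R M ≠ ⊤ ↔ ∃ n : ℕ, HasInjectiveDimensionLE M n := by
  simp only [← idimLE_iff_has, idim, ne_eq, sInf_eq_top, Set.mem_ofPred_eq]
  constructor
  · intro h
    by_contra hc
    push Not at hc
    exact h fun a ⟨n, _, hn⟩ => absurd hn (hc n)
  · rintro ⟨n, hn⟩ h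
    exact ENat.natCast_ne_top n (h _ ⟨n, rfl, hn⟩)

/-- an exact functor preserving injectives preserves bounds on the injective dimension -/
theorem hasInjDim_map {R S : Type u} [Ring R] [Ring S]
    (F : ModuleCat.{u} R ⥤ ModuleCat.{u} S) [F.Additive] [PreservesFiniteLimits F]
    [PreservesFiniteColimits F] [F.PreservesInjectiveObjects]
    (n : ℕ) (M : ModuleCat.{u} R) (h : HasInjectiveDimensionLE M n) :
    HasInjectiveDimensionLE (F.obj M) n := by
  induction n generalizing M with
  | zero =>
    simp only [HasInjectiveDimensionLE, zero_add,
      ← injective_iff_hasInjectiveDimensionLT_one] at h ⊢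
    exact F.injective_obj M
  | succ n ih =>
    let ⟨I, _, f, _⟩ := EnoughInjectives.presentation M
    let T := ShortComplex.mk f (cokernel.π f) (cokernel.condition f)
    have hT : T.ShortExact := { exact := ShortComplex.exact_cokernel f }
    have hT' : (T.map F).ShortExact := hT.map_of_exact F
    have hI : Injective (T.map F).X₂ := F.injective_obj I
    exact (hT'.hasInjectiveDimensionLT_X₃_iff n hI).1
      (ih _ ((hT.hasInjectiveDimensionLT_X₃_iff n ‹_›).2 h))

variable {R A : Type u} [Ring R] [Ring A] (ι : R →+* A)

/-- evaluation of an element of the coextension -/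
noncomputable def coev {X : ModuleCat.{u} R} (g : (ModuleCat.coextendScalars.{u, u, u} ι).obj X) (a : A) : X :=
  ModuleCat.CoextendScalars.equiv ι X g a

/-- constructor of elements of the coextension -/
noncomputable def comk {X : ModuleCat.{u} R} (g : A →+ X) (hg : ∀ r a, g (ι r * a) = r • g a) :
    (ModuleCat.coextendScalars.{u, u, u} ι).obj X :=
  (ModuleCat.CoextendScalars.equiv ι X).symm
    { toFun := fun a : A => g a
      map_add' := fun a b : A => g.map_add a b
      map_smul' := fun r (a : A) => hg r a }

theorem coev_comk {X : ModuleCat.{u} R} (g : A →+ X) (hg : ∀ r a, g (ι r * a) = r • g a) (a : A) :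
    coev ι (comk ι g hg) a = g a := rfl

theorem co_ext {X : ModuleCat.{u} R} {g h : (ModuleCat.coextendScalars.{u, u, u} ι).obj X}
    (H : ∀ a, coev ι g a = coev ι h a) : g = h :=
  ModuleCat.CoextendScalars.ext (LinearMap.ext H)

theorem coev_add {X : ModuleCat.{u} R} (g h : (ModuleCat.coextendScalars.{u, u, u} ι).obj X)
    (a : A) : coev ι (g + h) a = coev ι g a + coev ι h a := rfl

theorem coev_smul {X : ModuleCat.{u} R} (g : (ModuleCat.coextendScalars.{u, u, u} ι).obj X)
    (s a : A) : coev ι (s • g) a = coev ι g (a * s) := rfl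

theorem coev_add_right {X : ModuleCat.{u} R} (g : (ModuleCat.coextendScalars.{u, u, u} ι).obj X)
    (a b : A) : coev ι g (a + b) = coev ι g a + coev ι g b :=
  (ModuleCat.CoextendScalars.equiv ι X g).map_add a b

theorem coev_mul {X : ModuleCat.{u} R} (g : (ModuleCat.coextendScalars.{u, u, u} ι).obj X)
    (r : R) (b : A) : coev ι g (ι r * b) = r • coev ι g b :=
  (ModuleCat.CoextendScalars.equiv ι X g).map_smul r b

theorem coev_sum_right {X : ModuleCat.{u} R} (g : (ModuleCat.coextendScalars.{u, u, u} ι).obj X)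
    {n : ℕ} (f : Fin n → A) : coev ι g (∑ i, f i) = ∑ i, coev ι g (f i) :=
  map_sum (AddMonoidHom.mk' (coev ι g) (coev_add_right ι g)) f Finset.univ

theorem coev_sum {X : ModuleCat.{u} R} {n : ℕ}
    (f : Fin n → (ModuleCat.coextendScalars.{u, u, u} ι).obj X) (a : A) :
    coev ι (∑ i, f i) a = ∑ i, coev ι (f i) a :=
  map_sum (AddMonoidHom.mk' (fun g => coev ι g a) (fun g h => coev_add ι g h a)) f Finset.univ

theorem coev_map {X Y : ModuleCat.{u} R} (f : X ⟶ Y)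
    (g : (ModuleCat.coextendScalars.{u, u, u} ι).obj X) (a : A) :
    coev ι ((ModuleCat.coextendScalars.{u, u, u} ι).map f g) a = f (coev ι g a) := rfl

/-- the unit at an object -/
noncomputable def frobUnit (τ : A →+ R) (h1 : ∀ (r : R) (a : A), τ (ι r * a) = r * τ a)
    (h2 : ∀ (a : A) (r : R), τ (a * ι r) = τ a * r) (X : ModuleCat.{u} R) :
    X ⟶ (ModuleCat.restrictScalars ι).obj ((ModuleCat.coextendScalars.{u, u, u} ι).obj X) :=
  ModuleCat.ofHom
    (Y := (ModuleCat.restrictScalars ι).obj ((ModuleCat.coextendScalars.{u, u, u} ι).obj X))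
    { toFun := fun p => comk ι
        (AddMonoidHom.mk' (fun a => τ a • p) (fun a b => by rw [map_add, add_smul]))
        (fun r a => by simp [h1, mul_smul])
      map_add' := fun p q => co_ext ι fun a => smul_add (τ a) p q
      map_smul' := fun r p => co_ext ι fun a =>
        show τ a • r • p = τ (a * ι r) • p by rw [h2, mul_smul] }

/-- evaluation, with values in the `A`-module itself -/
noncomputable def coevA {Y : ModuleCat.{u} A}
    (g : (ModuleCat.coextendScalars.{u, u, u} ι).obj ((ModuleCat.restrictScalars ι).obj Y))
    (a : A) : Y := coev ι g a

theorem coevA_expand (τ : A →+ R) {n : ℕ} (x y : Fin n → A)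
    (h4 : ∀ a : A, ∑ i, ι (τ (a * x i)) * y i = a) {Y : ModuleCat.{u} A}
    (g : (ModuleCat.coextendScalars.{u, u, u} ι).obj ((ModuleCat.restrictScalars ι).obj Y))
    (a b : A) : coevA ι (a • g) b = ∑ j, ι (τ (b * (a * x j))) • coevA ι g (y j) := by
  change coev ι g (b * a) = _
  conv_lhs => rw [← h4 (b * a), coev_sum_right]
  refine Finset.sum_congr rfl fun j _ => ?_
  rw [coev_mul, mul_assoc]
  rfl

/-- the counit at an object -/
noncomputable def frobCounit (τ : A →+ R) {n : ℕ} (x y : Fin n → A)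
    (h3 : ∀ a : A, ∑ i, x i * ι (τ (y i * a)) = a)
    (h4 : ∀ a : A, ∑ i, ι (τ (a * x i)) * y i = a) (Y : ModuleCat.{u} A) :
    (ModuleCat.coextendScalars.{u, u, u} ι).obj ((ModuleCat.restrictScalars ι).obj Y) ⟶ Y :=
  ModuleCat.ofHom
    (X := (ModuleCat.coextendScalars.{u, u, u} ι).obj ((ModuleCat.restrictScalars ι).obj Y))
    { toFun := fun g => ∑ i, x i • coevA ι g (y i)
      map_add' := fun g h => by
        rw [← Finset.sum_add_distrib]
        exact Finset.sum_congr rfl fun i _ => smul_add (x i) (coevA ι g (y i)) (coevA ι h (y i))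
      map_smul' := fun a g => by
        refine (Finset.sum_congr rfl fun i _ =>
          congrArg (x i • ·) (coevA_expand ι τ x y h4 g a (y i))).trans ?_
        simp only [RingHom.id_apply, Finset.smul_sum, smul_smul]
        rw [Finset.sum_comm]
        refine Finset.sum_congr rfl fun j _ => ?_
        rw [← Finset.sum_smul, h3] }

/-- For a Frobenius extension, coextension is left adjoint to restriction. -/
noncomputable def frobAdj (τ : A →+ R) (h1 : ∀ (r : R) (a : A), τ (ι r * a) = r * τ a)
    (h2 : ∀ (a : A) (r : R), τ (a * ι r) = τ a * r) {n : ℕ} (x y : Fin n → A)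
    (h3 : ∀ a : A, ∑ i, x i * ι (τ (y i * a)) = a)
    (h4 : ∀ a : A, ∑ i, ι (τ (a * x i)) * y i = a) :
    ModuleCat.coextendScalars.{u, u, u} ι ⊣ ModuleCat.restrictScalars.{u} ι :=
  Adjunction.mkOfUnitCounit
    { unit :=
        { app := frobUnit ι τ h1 h2
          naturality := fun X Y f => ModuleCat.hom_ext <| LinearMap.ext fun p => co_ext ι fun a =>
            (f.hom.map_smul (τ a) p).symm }
      counit :=
        { app := frobCounit ι τ x y h3 h4
          naturality := fun X Y f => ModuleCat.hom_ext <| LinearMap.ext fun g => by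
            change ∑ i, x i • f.hom (coevA ι g (y i)) =
              f.hom (∑ i, x i • coevA ι g (y i))
            simp only [map_sum, map_smul] }
      left_triangle := by
        ext X : 2
        refine ModuleCat.hom_ext <| LinearMap.ext fun g => co_ext ι fun c => ?_
        change coev ι (∑ i, x i • (show (ModuleCat.coextendScalars.{u, u, u} ι).obj X from
          (frobUnit ι τ h1 h2 X).hom (coev ι g (y i)))) c = coev ι g c
        rw [coev_sum]
        change ∑ i, τ (c * x i) • coev ι g (y i) = _
        conv_rhs => rw [← h4 c, coev_sum_right]
        exact Finset.sum_congr rfl fun i _ => (coev_mul ι g _ _).symm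
      right_triangle := by
        ext Y : 2
        refine ModuleCat.hom_ext <| LinearMap.ext fun (p : Y) => ?_
        change ∑ i, x i • (ι (τ (y i)) • p) = p
        simp only [smul_smul]
        rw [← Finset.sum_smul]
        have := h3 1
        simp only [mul_one] at this
        rw [this, one_smul] }

theorem retract_of_epi {S : Type u} [Ring S] {X Y : ModuleCat.{u} S} (f : Y ⟶ X) [Epi f]
    [Projective X] (n : ℕ) (h : HasInjectiveDimensionLE Y n) : HasInjectiveDimensionLE X n :=
  Retract.hasInjectiveDimensionLT
    { i := Projective.factorThru (𝟙 X) f, r := f, retract := by simp } (n + 1)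

end Helpers

section Statement

variable {R A : Type u} [Ring R] [Ring A]

open CategoryTheory Limits in
theorem stmt17 (ι : R →+* A) (hF : IsFrobeniusExtension ι) (hS : IsSplitExtension ι) :
    (∀ M : ModuleCat.{u} R, Module.Projective R M → idim R M ≠ ⊤) ↔
    (∀ M : ModuleCat.{u} A, Module.Projective A M → idim A M ≠ ⊤) := by
  obtain ⟨-, τ, n, x, y, h1, h2, h3, h4⟩ := hF
  obtain ⟨π, p1, p2, p3⟩ := hS
  let adj1 := frobAdj ι τ h1 h2 x y h3 h4
  let adj2 := ModuleCat.restrictCoextendScalarsAdj.{u} ι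
  have c1 := adj1.leftAdjoint_preservesColimits
  have c2 := adj1.rightAdjoint_preservesLimits
  have c3 := adj2.leftAdjoint_preservesColimits
  have c4 := adj2.rightAdjoint_preservesLimits
  have a1 : (ModuleCat.coextendScalars.{u, u, u} ι).Additive := adj1.left_adjoint_additive
  have i1 : (ModuleCat.restrictScalars.{u} ι).PreservesInjectiveObjects :=
    Functor.preservesInjectiveObjects_of_adjunction_of_preservesMonomorphisms adj1
  have i2 : (ModuleCat.coextendScalars.{u, u, u} ι).PreservesInjectiveObjects :=
    Functor.preservesInjectiveObjects_of_adjunction_of_preservesMonomorphisms adj2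
  simp only [idim_ne_top_iff]
  constructor
  · intro H P hP
    have hP' : Projective P := (IsProjective.iff_projective P).1 hP
    have hQ : Projective ((ModuleCat.restrictScalars ι).obj P) := adj2.map_projective P hP'
    obtain ⟨m, hm⟩ := H ((ModuleCat.restrictScalars ι).obj P)
      (ModuleCat.projective_of_module_projective _)
    exact ⟨m, retract_of_epi (adj1.counit.app P) m
      (hasInjDim_map (ModuleCat.coextendScalars.{u, u, u} ι) m _ hm)⟩
  · intro H P hP
    have hP' : Projective P := (IsProjective.iff_projective P).1 hP
    have hQ : Projective ((ModuleCat.coextendScalars.{u, u, u} ι).obj P) :=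
      adj1.map_projective P hP'
    obtain ⟨m, hm⟩ := H ((ModuleCat.coextendScalars.{u, u, u} ι).obj P)
      (ModuleCat.projective_of_module_projective _)
    have : Epi (adj2.counit.app P) := by
      rw [ModuleCat.epi_iff_surjective]
      intro p
      refine ⟨comk ι (AddMonoidHom.mk' (fun a => π a • p) (fun a b => by rw [map_add, add_smul]))
        (fun r a => by simp [p1, mul_smul]), ?_⟩
      change π 1 • p = p
      have := p3 1
      rw [map_one] at this
      rw [this, one_smul]
    exact ⟨m, retract_of_epi (adj2.counit.app P) m
      (hasInjDim_map (ModuleCat.restrictScalars.{u} ι) m _ hm)⟩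

end Statement
end

section
/- Let R ⊂ A be a split Frobenius extension of rings. Then every injective left R-module has finite projective dimension over R if and only if every injective left A-module has finite projective dimension over A. -/
universe u

/-- `pdimLE R n M` means that `M` admits a projective resolution of length `n`. -/
def pdimLE (R : Type u) [Ring R] : ℕ → ModuleCat.{u} R → Prop
  | 0, M => Module.Projective R M
  | n + 1, M => ∃ (G : ModuleCat.{u} R) (f : G →ₗ[R] M),
      Function.Surjective f ∧ Module.Projective R G ∧
      pdimLE R n (ModuleCat.of R ↥(LinearMap.ker f))

/-- The projective dimension of a left `R`-module, in `ℕ∞`. -/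
noncomputable def pdim (R : Type u) [Ring R] (M : ModuleCat.{u} R) : ℕ∞ :=
  sInf {k : ℕ∞ | ∃ n : ℕ, k = (n : ℕ∞) ∧ pdimLE R n M}

open CategoryTheory

theorem pdimLE_iff (R : Type u) [Ring R] (n : ℕ) (M : ModuleCat.{u} R) :
    pdimLE R n M ↔ HasProjectiveDimensionLE M n := by
  induction n generalizing M with
  | zero =>
    rw [← projective_iff_hasProjectiveDimensionLE_zero, ← IsProjective.iff_projective]
    rfl
  | succ n ih =>
    constructor
    · rintro ⟨G, f, hf, hG, hk⟩
      have hS := LinearMap.shortExact_shortComplexKer hf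
      rw [ih] at hk
      exact (hS.hasProjectiveDimensionLT_X₃_iff n ((IsProjective.iff_projective _).1 hG)).2 hk
    · intro h
      refine ⟨M.projectiveShortComplex.X₂, M.projectiveShortComplex.g.hom, ?_, inferInstance, ?_⟩
      · exact (ModuleCat.epi_iff_surjective _).1 M.shortExact_projectiveShortComplex.epi_g
      · rw [ih]
        exact (M.shortExact_projectiveShortComplex.hasProjectiveDimensionLT_X₃_iff n
          inferInstance).1 h

theorem pdim_ne_top_iff (R : Type u) [Ring R] (M : ModuleCat.{u} R) :
    pdim R M ≠ ⊤ ↔ ∃ n, HasProjectiveDimensionLE M n := by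
  constructor
  · intro h
    by_contra! hn
    apply h
    have he : {k : ℕ∞ | ∃ n : ℕ, k = (n : ℕ∞) ∧ pdimLE R n M} = ∅ := by
      rw [Set.eq_empty_iff_forall_notMem]
      rintro k ⟨n, -, hk⟩
      exact hn n ((pdimLE_iff R n M).1 hk)
    unfold pdim
    rw [he, sInf_empty]
  · rintro ⟨n, hn⟩ h
    have : pdim R M ≤ (n : ℕ∞) := sInf_le ⟨n, rfl, (pdimLE_iff R n M).2 hn⟩
    rw [h] at this
    simp at this

theorem map_projDim {R A : Type u} [Ring R] [Ring A] (F : ModuleCat.{u} R ⥤ ModuleCat.{u} A)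
    [F.Additive] [F.PreservesProjectiveObjects] [Limits.PreservesFiniteLimits F]
    [Limits.PreservesFiniteColimits F] (n : ℕ) (M : ModuleCat.{u} R)
    (h : HasProjectiveDimensionLE M n) : HasProjectiveDimensionLE (F.obj M) n := by
  induction n generalizing M with
  | zero =>
    rw [← projective_iff_hasProjectiveDimensionLE_zero] at h ⊢
    exact F.projective_obj_of_projective h
  | succ n ih =>
    have hS := M.shortExact_projectiveShortComplex
    have h1 := (hS.hasProjectiveDimensionLT_X₃_iff n inferInstance).1 h
    exact ((hS.map_of_exact F).hasProjectiveDimensionLT_X₃_iff n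
      (F.projective_obj_of_projective inferInstance)).2 (ih _ h1)

section FrobAdj

variable {R A : Type u} [Ring R] [Ring A]

/-- Evaluation of an element of the coextended module. -/
noncomputable def coextEv (ι : R →+* A) (X : ModuleCat.{u} R) :
    (ModuleCat.coextendScalars.{u, u, u} ι).obj X →+ (A →+ X) where
  toFun φ := (ModuleCat.CoextendScalars.equiv ι X φ).toAddMonoidHom
  map_zero' := rfl
  map_add' _ _ := rfl

theorem coextEv_ext (ι : R →+* A) (X : ModuleCat.{u} R)
    {φ ψ : (ModuleCat.coextendScalars.{u, u, u} ι).obj X}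
    (h : ∀ a : A, coextEv ι X φ a = coextEv ι X ψ a) : φ = ψ :=
  (ModuleCat.CoextendScalars.equiv ι X).injective (LinearMap.ext h)

theorem coextEv_smul (ι : R →+* A) (X : ModuleCat.{u} R)
    (φ : (ModuleCat.coextendScalars.{u, u, u} ι).obj X) (b a : A) :
    coextEv ι X (b • φ) a = coextEv ι X φ (a * b) := rfl

theorem coextEv_lin (ι : R →+* A) (X : ModuleCat.{u} R)
    (φ : (ModuleCat.coextendScalars.{u, u, u} ι).obj X) (r : R) (a : A) :
    coextEv ι X φ (ι r * a) = r • coextEv ι X φ a :=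
  (ModuleCat.CoextendScalars.equiv ι X φ).map_smul r a

/-- Construct an element of the coextended module. -/
noncomputable def coextMk (ι : R →+* A) (X : ModuleCat.{u} R) (f : A →+ X)
    (hf : ∀ (r : R) (a : A), f (ι r * a) = r • f a) :
    (ModuleCat.coextendScalars.{u, u, u} ι).obj X :=
  (ModuleCat.CoextendScalars.equiv ι X).symm
    { toFun := fun a : A => f a
      map_add' := f.map_add
      map_smul' := hf }

theorem coextEv_mk (ι : R →+* A) (X : ModuleCat.{u} R) (f : A →+ X) (hf) (a : A) :
    coextEv ι X (coextMk ι X f hf) a = f a := rfl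

/-- A morphism to a restricted module, as an additive map. -/
noncomputable def resTo (ι : R →+* A) (X : ModuleCat.{u} R) (M : ModuleCat.{u} A)
    (g : X ⟶ (ModuleCat.restrictScalars.{u} ι).obj M) : X →+ M := g.hom.toAddMonoidHom

theorem resTo_smul (ι : R →+* A) (X : ModuleCat.{u} R) (M : ModuleCat.{u} A)
    (g : X ⟶ (ModuleCat.restrictScalars.{u} ι).obj M) (r : R) (x : X) :
    resTo ι X M g (r • x) = ι r • resTo ι X M g x := g.hom.map_smul r x

theorem resTo_ext (ι : R →+* A) (X : ModuleCat.{u} R) (M : ModuleCat.{u} A)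
    {g g' : X ⟶ (ModuleCat.restrictScalars.{u} ι).obj M}
    (h : ∀ x, resTo ι X M g x = resTo ι X M g' x) : g = g' :=
  ModuleCat.hom_ext (LinearMap.ext h)

theorem resTo_comp (ι : R →+* A) (X : ModuleCat.{u} R) (M N : ModuleCat.{u} A)
    (g : X ⟶ (ModuleCat.restrictScalars.{u} ι).obj M) (f : M ⟶ N) (x : X) :
    resTo ι X N (g ≫ (ModuleCat.restrictScalars ι).map f) x = f.hom (resTo ι X M g x) := rfl

/-- Build a morphism to a restricted module from an additive map. -/
noncomputable def resMk (ι : R →+* A) (X : ModuleCat.{u} R) (M : ModuleCat.{u} A) (f : X →+ M)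
    (hf : ∀ (r : R) (x : X), f (r • x) = ι r • f x) :
    X ⟶ (ModuleCat.restrictScalars.{u} ι).obj M :=
  ModuleCat.ofHom (Y := (ModuleCat.restrictScalars ι).obj M)
    { toFun := fun x => f x
      map_add' := f.map_add
      map_smul' := hf }

theorem resTo_mk (ι : R →+* A) (X : ModuleCat.{u} R) (M : ModuleCat.{u} A) (f : X →+ M) (hf)
    (x : X) : resTo ι X M (resMk ι X M f hf) x = f x := rfl

/-- `x ↦ (a ↦ τ a • x)`. -/
noncomputable def coextOf (ι : R →+* A) (τ : A →+ R)
    (h1 : ∀ (r : R) (a : A), τ (ι r * a) = r * τ a)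
    (h2 : ∀ (a : A) (r : R), τ (a * ι r) = τ a * r) (X : ModuleCat.{u} R) :
    X ⟶ (ModuleCat.restrictScalars ι).obj ((ModuleCat.coextendScalars ι).obj X) :=
  resMk ι X _
    (AddMonoidHom.mk' (fun x => coextMk ι X
      (AddMonoidHom.mk' (fun a => τ a • x) (fun a b => by rw [map_add, add_smul]))
      (fun r a => by simp [h1, mul_smul]))
      (fun x x' => coextEv_ext ι X fun a => by
        rw [map_add, AddMonoidHom.add_apply]
        simp only [coextEv_mk, AddMonoidHom.mk'_apply, smul_add]))
    (fun r x => coextEv_ext ι X fun a => by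
      rw [coextEv_smul]
      simp only [AddMonoidHom.mk'_apply, coextEv_mk, h2, mul_smul])

theorem coextOf_apply (ι : R →+* A) (τ : A →+ R) (h1 h2) (X : ModuleCat.{u} R) (x : X) (a : A) :
    coextEv ι X (resTo ι X _ (coextOf ι τ h1 h2 X) x) a = τ a • x := rfl

/-- `φ ↦ ∑ x i • g (φ (y i))`. -/
noncomputable def coextLift (ι : R →+* A) (τ : A →+ R) {n : ℕ} (x y : Fin n → A)
    (h3 : ∀ a : A, ∑ i, x i * ι (τ (y i * a)) = a)
    (h4 : ∀ a : A, ∑ i, ι (τ (a * x i)) * y i = a) (X : ModuleCat.{u} R) (M : ModuleCat.{u} A)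
    (g : X ⟶ (ModuleCat.restrictScalars ι).obj M) :
    (ModuleCat.coextendScalars ι).obj X ⟶ M :=
  ModuleCat.ofHom (X := (ModuleCat.coextendScalars.{u, u, u} ι).obj X)
  { toFun := fun φ : (ModuleCat.coextendScalars.{u, u, u} ι).obj X => ∑ i, x i • resTo ι X M g (coextEv ι X φ (y i))
    map_add' := fun φ ψ => by
      rw [← Finset.sum_add_distrib]
      refine Finset.sum_congr rfl fun i _ => ?_
      rw [map_add, AddMonoidHom.add_apply, map_add, smul_add]
    map_smul' := fun b φ => by
      have key : ∀ i, x i • resTo ι X M g (coextEv ι X (b • φ) (y i)) =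
          ∑ j, (x i * ι (τ (y i * (b * x j)))) • resTo ι X M g (coextEv ι X φ (y j)) := by
        intro i
        rw [coextEv_smul]
        conv_lhs => rw [← h4 (y i * b)]
        rw [map_sum, map_sum, Finset.smul_sum]
        refine Finset.sum_congr rfl fun j _ => ?_
        rw [coextEv_lin, resTo_smul, mul_assoc, mul_smul]
      refine (Finset.sum_congr rfl fun i _ => key i).trans ?_
      rw [Finset.sum_comm]
      simp only [← Finset.sum_smul, h3, RingHom.id_apply]
      simp only [mul_smul, Finset.smul_sum] }

theorem coextLift_apply (ι : R →+* A) (τ : A →+ R) {n : ℕ} (x y : Fin n → A) (h3 h4)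
    (X : ModuleCat.{u} R) (M : ModuleCat.{u} A)
    (g : X ⟶ (ModuleCat.restrictScalars ι).obj M) (φ : (ModuleCat.coextendScalars ι).obj X) :
    (coextLift ι τ x y h3 h4 X M g).hom φ =
      ∑ i, x i • resTo ι X M g (coextEv ι X φ (y i)) := rfl

/-- For a Frobenius extension, coextension is left adjoint to restriction. -/
noncomputable def coextRestrictAdj (ι : R →+* A) (τ : A →+ R) {n : ℕ} (x y : Fin n → A)
    (h1 : ∀ (r : R) (a : A), τ (ι r * a) = r * τ a)
    (h2 : ∀ (a : A) (r : R), τ (a * ι r) = τ a * r)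
    (h3 : ∀ a : A, ∑ i, x i * ι (τ (y i * a)) = a)
    (h4 : ∀ a : A, ∑ i, ι (τ (a * x i)) * y i = a) :
    ModuleCat.coextendScalars.{u, u, u} ι ⊣ ModuleCat.restrictScalars.{u} ι :=
  Adjunction.mkOfHomEquiv
  { homEquiv := fun X M =>
    { toFun := fun f => coextOf ι τ h1 h2 X ≫ (ModuleCat.restrictScalars ι).map f
      invFun := fun g => coextLift ι τ x y h3 h4 X M g
      left_inv := fun f => by
        refine ModuleCat.hom_ext (LinearMap.ext fun φ => ?_)
        rw [coextLift_apply]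
        simp only [resTo_comp, ← map_smul, ← map_sum]
        congr 1
        refine coextEv_ext ι X fun a => ?_
        rw [map_sum, AddMonoidHom.finsetSum_apply]
        simp only [coextEv_smul, coextOf_apply, ← coextEv_lin, ← map_sum, h4]
      right_inv := fun g => by
        refine resTo_ext ι X M fun z => ?_
        rw [resTo_comp, coextLift_apply]
        have : ∀ i, x i • resTo ι X M g (coextEv ι X
            (resTo ι X _ (coextOf ι τ h1 h2 X) z) (y i)) =
            (x i * ι (τ (y i * 1))) • resTo ι X M g z := by
          intro i
          rw [coextOf_apply, resTo_smul, mul_smul, mul_one]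
        simp only [this, ← Finset.sum_smul, h3, one_smul] }
    homEquiv_naturality_left_symm := fun f g => by
      ext φ
      rfl
    homEquiv_naturality_right := fun f g => by
      ext z
      rfl }

end FrobAdj

section Statement

variable {R A : Type u} [Ring R] [Ring A]

theorem stmt18 (ι : R →+* A) (hF : IsFrobeniusExtension ι) (hS : IsSplitExtension ι) :
    (∀ M : ModuleCat.{u} R, Module.Injective R M → pdim R M ≠ ⊤) ↔
    (∀ M : ModuleCat.{u} A, Module.Injective A M → pdim A M ≠ ⊤) := by
  obtain ⟨-, τ, n, x, y, h1, h2, h3, h4⟩ := hF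
  obtain ⟨π, p1, p2, p3⟩ := hS
  have adj := coextRestrictAdj ι τ x y h1 h2 h3 h4
  have adj' := ModuleCat.restrictCoextendScalarsAdj.{u} ι
  have lc := adj.leftAdjoint_preservesColimits
  have rl := adj.rightAdjoint_preservesLimits
  have lc' := adj'.leftAdjoint_preservesColimits
  have rl' := adj'.rightAdjoint_preservesLimits
  have a1 : (ModuleCat.restrictScalars.{u} ι).PreservesInjectiveObjects :=
    Functor.preservesInjectiveObjects_of_adjunction_of_preservesMonomorphisms adj
  have a2 : (ModuleCat.coextendScalars.{u, u, u} ι).PreservesInjectiveObjects :=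
    Functor.preservesInjectiveObjects_of_adjunction_of_preservesMonomorphisms adj'
  have a3 : (ModuleCat.coextendScalars.{u, u, u} ι).PreservesProjectiveObjects :=
    Functor.preservesProjectiveObjects_of_adjunction_of_preservesEpimorphisms adj
  have a4 : (ModuleCat.restrictScalars.{u} ι).PreservesProjectiveObjects :=
    Functor.preservesProjectiveObjects_of_adjunction_of_preservesEpimorphisms adj'
  have a5 : (ModuleCat.coextendScalars.{u, u, u} ι).Additive :=
    Functor.additive_of_preserves_binary_products _
  simp only [pdim_ne_top_iff, Module.injective_iff_injective_object]
  constructor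
  · intro H M hM
    replace hM : Injective M := hM
    obtain ⟨k, hk⟩ := H ((ModuleCat.restrictScalars ι).obj M)
      ((ModuleCat.restrictScalars ι).injective_obj_of_injective hM)
    refine ⟨k, ?_⟩
    have h := map_projDim (ModuleCat.coextendScalars.{u, u, u} ι) k _ hk
    let e : M ⟶ (ModuleCat.coextendScalars ι).obj ((ModuleCat.restrictScalars ι).obj M) :=
      ModuleCat.ofHom (ModuleCat.RestrictionCoextensionAdj.app' ι M)
    have : Mono e := by
      rw [ModuleCat.mono_iff_injective]
      intro m m' hm
      have h5 : (1 : A) • m = (1 : A) • m' := congrArg (fun g =>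
        ModuleCat.CoextendScalars.equiv ι ((ModuleCat.restrictScalars ι).obj M) g (1 : A)) hm
      simpa using h5
    have ret : Retract M ((ModuleCat.coextendScalars ι).obj
      ((ModuleCat.restrictScalars ι).obj M)) := ⟨e, Injective.factorThru (𝟙 M) e, by simp⟩
    exact ret.hasProjectiveDimensionLT _
  · intro H M hM
    replace hM : Injective M := hM
    obtain ⟨k, hk⟩ := H ((ModuleCat.coextendScalars ι).obj M)
      ((ModuleCat.coextendScalars ι).injective_obj_of_injective hM)
    refine ⟨k, ?_⟩
    have h := map_projDim (ModuleCat.restrictScalars.{u} ι) k _ hk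
    have ret : Retract M ((ModuleCat.restrictScalars ι).obj
        ((ModuleCat.coextendScalars ι).obj M)) :=
      ⟨coextOf ι π p1 p2 M, (ModuleCat.RestrictionCoextensionAdj.counit' ι).app M, by
        ext m
        change π 1 • m = m
        rw [← map_one ι, p3, one_smul]⟩
    exact ret.hasProjectiveDimensionLT _

end Statement
end
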